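/- arXiv:2301.10945 — 8 statements merged into one kernel-verified Lean document; each statement's English description precedes it below -/
import Mathlib

section
/- Under the stated assumptions, the value function F(x) := f(x, y*(x)) is differentiable on ℝ^{d_x}, and for every x the Hessian block ∇²_{yy} g(x, y*(x)) is an invertible self-adjoint operator with all eigenvalues at least μ_g, and the hyper-gradient satisfies ∇F(x) = ∇_x f(x, y*(x)) − ∇²_{xy} g(x, y*(x)) [∇²_{yy} g(x, y*(x))]^{-1} ∇_y f(x, y*(x)). -/
open Set
open scoped RealInnerProductSpace

noncomputable section

section PartialHessian

open ContinuousLinearMap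

variable {X Y : Type*} [NormedAddCommGroup X] [NormedSpace ℝ X]
  [NormedAddCommGroup Y] [InnerProductSpace ℝ Y]

theorem hasFDerivAt_fderiv_apply {E : Type*} [NormedAddCommGroup E] [NormedSpace ℝ E] {g : E → ℝ}
    (hg : ContDiff ℝ 2 g) (p q : E) :
    HasFDerivAt (fun p' => fderiv ℝ g p' q) ((fderiv ℝ (fderiv ℝ g) p).flip q) p := by
  have hg' : HasFDerivAt (fderiv ℝ g) (fderiv ℝ (fderiv ℝ g) p) p :=
    ((hg.fderiv_right (m := 1) (by norm_num)).differentiable one_ne_zero p).hasFDerivAt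
  simpa using hg'.clm_apply (hasFDerivAt_const q p)

/-- The derivative of `fderiv ℝ g (x, y) (0, w)` along a segment in the second variable. -/
theorem hasDerivAt_fderiv_inr_lineMap {g : X × Y → ℝ} (hg : ContDiff ℝ 2 g)
    (x : X) (y v w : Y) (t : ℝ) :
    HasDerivAt (fun s : ℝ => fderiv ℝ g (x, y + s • v) (0, w))
      (fderiv ℝ (fderiv ℝ g) (x, y + t • v) (0, v) (0, w)) t := by
  have hline : HasDerivAt (fun s : ℝ => (x, y + s • v)) ((0 : X), v) t := by
    refine (hasDerivAt_const t x).prodMk ?_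
    simpa using ((hasDerivAt_id t).smul_const v).const_add y
  exact (hasFDerivAt_fderiv_apply hg (x, y + t • v) (0, w)).comp_hasDerivAt t hline

/-- A `μ`-strongly convex `C²` function has Hessian at least `μ`. -/
theorem le_snd_fderiv_of_strongConvexOn {g : X × Y → ℝ} {μ : ℝ} (hg : ContDiff ℝ 2 g) (x : X)
    (hsc : StrongConvexOn univ μ fun y => g (x, y)) (y v : Y) :
    μ * ‖v‖ ^ 2 ≤ fderiv ℝ (fderiv ℝ g) (x, y) (0, v) (0, v) := by
  have hconv : ConvexOn ℝ univ
      (fun t : ℝ => g (x, y + t • v) - μ / 2 * ‖y + t • v‖ ^ 2) := by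
    have h := (strongConvexOn_iff_convex.1 hsc).comp_affineMap (AffineMap.lineMap y (y + v))
    simpa [Function.comp_def, AffineMap.lineMap_apply, add_comm] using h
  have hline (t : ℝ) : HasDerivAt (fun s : ℝ => y + s • v) v t := by
    simpa using ((hasDerivAt_id t).smul_const v).const_add y
  have hderiv (t : ℝ) : HasDerivAt (fun t : ℝ => g (x, y + t • v) - μ / 2 * ‖y + t • v‖ ^ 2)
      (fderiv ℝ g (x, y + t • v) (0, v) - μ * ⟪y + t • v, v⟫) t := by
    have h₁ : HasDerivAt (fun s : ℝ => g (x, y + s • v)) (fderiv ℝ g (x, y + t • v) (0, v)) t :=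
      ((hg.differentiable two_ne_zero _).hasFDerivAt).comp_hasDerivAt t
        ((hasDerivAt_const t x).prodMk (hline t))
    refine (h₁.sub ((hline t).norm_sq.const_mul (μ / 2))).congr_deriv ?_
    ring
  have hmono : Monotone
      (fun t : ℝ => fderiv ℝ g (x, y + t • v) (0, v) - μ * ⟪y + t • v, v⟫) := by
    have h := hconv.monotoneOn_deriv fun t _ => (hderiv t).differentiableAt
    rwa [monotoneOn_univ, funext fun t => (hderiv t).deriv] at h
  have hinner : HasDerivAt (fun t : ℝ => μ * ⟪y + t • v, v⟫) (μ * ‖v‖ ^ 2) 0 := by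
    have h := ((hline 0).inner ℝ (hasDerivAt_const 0 v)).const_mul μ
    simpa using h
  have h₂ := (hasDerivAt_fderiv_inr_lineMap hg x y v v 0).sub hinner
  have h₃ : 0 ≤ fderiv ℝ (fderiv ℝ g) (x, y + (0 : ℝ) • v) (0, v) (0, v) - μ * ‖v‖ ^ 2 := by
    rw [← h₂.deriv]
    exact hmono.deriv_nonneg
  simpa using h₃

/-- A partial critical point of a function with positive definite partial Hessian is unique. -/
theorem eq_of_fderiv_inr_eq_zero {g : X × Y → ℝ} {μ : ℝ} (hg : ContDiff ℝ 2 g) (hμ : 0 < μ)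
    {x : X} (hH : ∀ y v, μ * ‖v‖ ^ 2 ≤ fderiv ℝ (fderiv ℝ g) (x, y) (0, v) (0, v))
    {a b : Y} (ha : ∀ w, fderiv ℝ g (x, a) (0, w) = 0)
    (hb : ∀ w, fderiv ℝ g (x, b) (0, w) = 0) : a = b := by
  have hd := hasDerivAt_fderiv_inr_lineMap hg x a (b - a) (b - a)
  obtain ⟨t, -, ht⟩ := exists_hasDerivAt_eq_zero zero_lt_one
    (fun t _ => (hd t).continuousAt.continuousWithinAt) (by simp [ha, hb]) (fun t _ => hd t)
  have hle := hH (a + t • (b - a)) (b - a)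
  rw [ht] at hle
  by_contra hab
  have : 0 < ‖b - a‖ := norm_pos_iff.2 (sub_ne_zero.2 (Ne.symm hab))
  have : 0 < μ * ‖b - a‖ ^ 2 := by positivity
  linarith

theorem fderiv_inr_eq_zero_of_forall_le {g : X × Y → ℝ} {x : X} {y : Y}
    (hg : DifferentiableAt ℝ g (x, y)) (hmin : ∀ y', g (x, y) ≤ g (x, y')) (w : Y) :
    fderiv ℝ g (x, y) (0, w) = 0 := by
  have h := hg.hasFDerivAt.comp y (hasFDerivAt_prodMk_right x y)
  have hloc : IsLocalMin (g ∘ fun y' => (x, y')) y := Filter.Eventually.of_forall hmin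
  simpa using DFunLike.congr_fun (hloc.hasFDerivAt_eq_zero h) w

/-- The partial Hessian `(v, w) ↦ D²g(p)(0, v)(0, w)` as a bounded bilinear form. -/
def partialHessian (g : X × Y → ℝ) (p : X × Y) : Y →L[ℝ] Y →L[ℝ] ℝ :=
  ((compL ℝ Y (X × Y) ℝ).flip (inr ℝ X Y) ∘L fderiv ℝ (fderiv ℝ g) p) ∘L inr ℝ X Y

@[simp]
theorem partialHessian_apply (g : X × Y → ℝ) (p : X × Y) (v w : Y) :
    partialHessian g p v w = fderiv ℝ (fderiv ℝ g) p (0, v) (0, w) := rfl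

theorem isCoercive_partialHessian {g : X × Y → ℝ} {p : X × Y} {μ : ℝ} (hμ : 0 < μ)
    (hH : ∀ v, μ * ‖v‖ ^ 2 ≤ fderiv ℝ (fderiv ℝ g) p (0, v) (0, v)) :
    IsCoercive (partialHessian g p) :=
  ⟨μ, hμ, fun v => by simpa [sq, mul_assoc] using hH v⟩

/-- Implicit differentiation of the critical point equation. -/
theorem snd_fderiv_inl_eq_neg {g : X × Y → ℝ} (hg : ContDiff ℝ 2 g) {ystar : X → Y}
    (hcrit : ∀ x w, fderiv ℝ g (x, ystar x) (0, w) = 0) {x : X}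
    (hy : DifferentiableAt ℝ ystar x) (u : X) (w : Y) :
    fderiv ℝ (fderiv ℝ g) (x, ystar x) (u, 0) (0, w) =
      -fderiv ℝ (fderiv ℝ g) (x, ystar x) (0, fderiv ℝ ystar x u) (0, w) := by
  have hpair : HasFDerivAt (fun z => (z, ystar z))
      ((ContinuousLinearMap.id ℝ X).prod (fderiv ℝ ystar x)) x :=
    (hasFDerivAt_id x).prodMk hy.hasFDerivAt
  have h := (hasFDerivAt_fderiv_apply hg (x, ystar x) (0, w)).comp x hpair
  have hzero : HasFDerivAt (fun z => fderiv ℝ g (z, ystar z) (0, w)) (0 : X →L[ℝ] ℝ) x := by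
    simp only [hcrit]
    exact hasFDerivAt_const 0 x
  have hu : fderiv ℝ (fderiv ℝ g) (x, ystar x) (u, fderiv ℝ ystar x u) (0, w) = 0 := by
    simpa using DFunLike.congr_fun (h.unique hzero) u
  have hsplit : (u, fderiv ℝ ystar x u) = (u, 0) + (0, fderiv ℝ ystar x u) := by simp
  rw [hsplit, map_add, add_apply] at hu
  linarith

variable [CompleteSpace Y]

theorem IsCoercive.isInvertible {B : Y →L[ℝ] Y →L[ℝ] ℝ} (hB : IsCoercive B) :
    B.IsInvertible := by
  refine ⟨hB.continuousLinearEquivOfBilin.trans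
    (InnerProductSpace.toDual ℝ Y).toContinuousLinearEquiv, ?_⟩
  ext v w
  exact hB.continuousLinearEquivOfBilin_apply v w

/-- A selection of partial critical points is differentiable when the partial Hessian is uniformly
positive definite. -/
theorem differentiableAt_of_fderiv_inr_eq_zero [CompleteSpace X] {g : X × Y → ℝ} {μ : ℝ}
    (hg : ContDiff ℝ 2 g) (hμ : 0 < μ)
    (hH : ∀ x y v, μ * ‖v‖ ^ 2 ≤ fderiv ℝ (fderiv ℝ g) (x, y) (0, v) (0, v))
    {ystar : X → Y} (hcrit : ∀ x w, fderiv ℝ g (x, ystar x) (0, w) = 0) (x : X) :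
    DifferentiableAt ℝ ystar x := by
  have hg' : HasStrictFDerivAt (fderiv ℝ g) (fderiv ℝ (fderiv ℝ g) (x, ystar x)) (x, ystar x) :=
    (hg.fderiv_right (m := 1) (by norm_num)).contDiffAt.hasStrictFDerivAt one_ne_zero
  have hG : HasStrictFDerivAt (fun p => (compL ℝ Y (X × Y) ℝ).flip (inr ℝ X Y) (fderiv ℝ g p))
      ((compL ℝ Y (X × Y) ℝ).flip (inr ℝ X Y) ∘L fderiv ℝ (fderiv ℝ g) (x, ystar x)) (x, ystar x) :=
    HasStrictFDerivAt.comp (x, ystar x) (ContinuousLinearMap.hasStrictFDerivAt _) hg'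
  have hinv : (((compL ℝ Y (X × Y) ℝ).flip (inr ℝ X Y) ∘L
      fderiv ℝ (fderiv ℝ g) (x, ystar x)) ∘L inr ℝ X Y).IsInvertible :=
    (isCoercive_partialHessian hμ (hH x (ystar x))).isInvertible
  refine (hG.hasStrictFDerivAt_implicitFunctionOfProdDomain hinv).hasFDerivAt.differentiableAt
    |>.congr_of_eventuallyEq ?_
  filter_upwards [hG.eventually_apply_implicitFunctionOfProdDomain hinv] with z hz
  refine eq_of_fderiv_inr_eq_zero hg hμ (hH z) (hcrit z) fun w => ?_
  have h := DFunLike.congr_fun hz w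
  simpa [hcrit] using h

end PartialHessian

section Gradient

variable {X Y : Type*} [NormedAddCommGroup X] [NormedAddCommGroup Y]

theorem inner_gradient_prodMk_left [InnerProductSpace ℝ X] [CompleteSpace X]
    [NormedSpace ℝ Y] {f : X × Y → ℝ} {x : X} {y : Y}
    (hf : DifferentiableAt ℝ f (x, y)) (u : X) :
    ⟪gradient (fun x' => f (x', y)) x, u⟫ = fderiv ℝ f (x, y) (u, 0) := by
  have h := hf.hasFDerivAt.comp x (hasFDerivAt_prodMk_left (𝕜 := ℝ) x y)
  rw [inner_gradient_left]
  exact DFunLike.congr_fun h.fderiv u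

theorem inner_gradient_prodMk_right [NormedSpace ℝ X] [InnerProductSpace ℝ Y]
    [CompleteSpace Y] {f : X × Y → ℝ} {x : X} {y : Y}
    (hf : DifferentiableAt ℝ f (x, y)) (v : Y) :
    ⟪gradient (fun y' => f (x, y')) y, v⟫ = fderiv ℝ f (x, y) (0, v) := by
  have h := hf.hasFDerivAt.comp y (hasFDerivAt_prodMk_right x y)
  rw [inner_gradient_left]
  exact DFunLike.congr_fun h.fderiv v

end Gradient

theorem hypergradient_formula
    (dx dy : ℕ)
    (f g : EuclideanSpace ℝ (Fin dx) × EuclideanSpace ℝ (Fin dy) → ℝ)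
    (lf0 lf1 lg1 lg2 μg : ℝ)
    (hμg : 0 < μg)
    (hf : ContDiff ℝ 1 f)
    (hf1 : ∀ p q, ‖fderiv ℝ f p - fderiv ℝ f q‖ ≤ lf1 * ‖p - q‖)
    (hg : ContDiff ℝ 2 g)
    (hg1 : ∀ p q, ‖fderiv ℝ g p - fderiv ℝ g q‖ ≤ lg1 * ‖p - q‖)
    (hg2 : ∀ p q, ‖fderiv ℝ (fderiv ℝ g) p - fderiv ℝ (fderiv ℝ g) q‖ ≤ lg2 * ‖p - q‖)
    (hfy0 : ∀ x y, ‖gradient (fun y' => f (x, y')) y‖ ≤ lf0)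
    (hsc : ∀ x, StrongConvexOn univ μg (fun y => g (x, y)))
    (ystar : EuclideanSpace ℝ (Fin dx) → EuclideanSpace ℝ (Fin dy))
    (hystar : ∀ x y, g (x, ystar x) ≤ g (x, y)) :
    Differentiable ℝ (fun x => f (x, ystar x)) ∧
    ∀ x : EuclideanSpace ℝ (Fin dx),
      ∃ Hyy : EuclideanSpace ℝ (Fin dy) →L[ℝ] EuclideanSpace ℝ (Fin dy),
      ∃ Hxy : EuclideanSpace ℝ (Fin dy) →L[ℝ] EuclideanSpace ℝ (Fin dx),
      ∃ Hinv : EuclideanSpace ℝ (Fin dy) →L[ℝ] EuclideanSpace ℝ (Fin dy),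
        (∀ v w : EuclideanSpace ℝ (Fin dy),
            ⟪Hyy v, w⟫ = fderiv ℝ (fderiv ℝ g) (x, ystar x) (0, v) (0, w)) ∧
        (∀ (v : EuclideanSpace ℝ (Fin dy)) (u : EuclideanSpace ℝ (Fin dx)),
            ⟪Hxy v, u⟫ = fderiv ℝ (fderiv ℝ g) (x, ystar x) (u, 0) (0, v)) ∧
        IsSelfAdjoint Hyy ∧
        (∀ v : EuclideanSpace ℝ (Fin dy), μg * ‖v‖ ^ 2 ≤ ⟪Hyy v, v⟫) ∧
        Hyy.comp Hinv = ContinuousLinearMap.id ℝ (EuclideanSpace ℝ (Fin dy)) ∧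
        Hinv.comp Hyy = ContinuousLinearMap.id ℝ (EuclideanSpace ℝ (Fin dy)) ∧
        gradient (fun x' => f (x', ystar x')) x =
          gradient (fun x' => f (x', ystar x)) x -
            Hxy (Hinv (gradient (fun y' => f (x, y')) (ystar x))) := by
  have hH (x y v) : μg * ‖v‖ ^ 2 ≤ fderiv ℝ (fderiv ℝ g) (x, y) (0, v) (0, v) :=
    le_snd_fderiv_of_strongConvexOn hg x (hsc x) y v
  have hcrit (x w) : fderiv ℝ g (x, ystar x) (0, w) = 0 :=
    fderiv_inr_eq_zero_of_forall_le (hg.differentiable two_ne_zero _) (hystar x) w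
  have hy (x) : DifferentiableAt ℝ ystar x :=
    differentiableAt_of_fderiv_inr_eq_zero hg hμg hH hcrit x
  have hfd : Differentiable ℝ f := hf.differentiable one_ne_zero
  have hF (x) : HasFDerivAt (fun x => f (x, ystar x))
      (fderiv ℝ f (x, ystar x) ∘L (ContinuousLinearMap.id ℝ _).prod (fderiv ℝ ystar x)) x :=
    (hfd _).hasFDerivAt.comp x ((hasFDerivAt_id x).prodMk (hy x).hasFDerivAt)
  refine ⟨fun x => (hF x).differentiableAt, fun x => ?_⟩
  set D := fderiv ℝ (fderiv ℝ g) (x, ystar x) with hD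
  have hsymm (p q) : D p q = D q p :=
    (hg.contDiffAt.isSymmSndFDerivAt (by simp)).eq p q
  have hB := isCoercive_partialHessian hμg (hH x (ystar x))
  let e := hB.continuousLinearEquivOfBilin
  have he (v w) : ⟪e v, w⟫ = D (0, v) (0, w) := hB.continuousLinearEquivOfBilin_apply v w
  let Hxy : EuclideanSpace ℝ (Fin dy) →L[ℝ] EuclideanSpace ℝ (Fin dx) :=
    (InnerProductSpace.toDual ℝ _).symm.toContinuousLinearEquiv.toContinuousLinearMap ∘L
      (ContinuousLinearMap.precomp ℝ (ContinuousLinearMap.inl ℝ _ _) ∘L D) ∘L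
        ContinuousLinearMap.inr ℝ _ _
  have hHxy (v u) : ⟪Hxy v, u⟫ = D (u, 0) (0, v) := by
    rw [hsymm]
    simp [Hxy]
  refine ⟨e, Hxy, e.symm, he, hHxy, ?_, fun v => ?_, e.coe_comp_coe_symm,
    e.coe_symm_comp_coe, ?_⟩
  · rw [ContinuousLinearMap.isSelfAdjoint_iff_isSymmetric]
    intro v w
    exact (he v w).trans ((hsymm _ _).trans (he w v).symm) |>.trans (real_inner_comm _ _)
  · exact (hH x (ystar x) v).trans (he v v).ge
  · refine ext_inner_right ℝ fun u => ?_
    set w := gradient (fun y' => f (x, y')) (ystar x) with hw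
    have hsplit : (u, fderiv ℝ ystar x u) = (u, 0) + (0, fderiv ℝ ystar x u) := by simp
    have hadj : fderiv ℝ f (x, ystar x) (0, fderiv ℝ ystar x u) = -⟪Hxy (e.symm w), u⟫ := by
      rw [← inner_gradient_prodMk_right (hfd _), ← hw, hHxy, hD,
        snd_fderiv_inl_eq_neg hg hcrit (hy x), ← hD, hsymm, ← he, e.apply_symm_apply, neg_neg]
    calc ⟪gradient (fun x' => f (x', ystar x')) x, u⟫
        = fderiv ℝ f (x, ystar x) (u, fderiv ℝ ystar x u) := by
          rw [inner_gradient_left, (hF x).fderiv]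
          rfl
      _ = ⟪gradient (fun x' => f (x', ystar x)) x - Hxy (e.symm w), u⟫ := by
          rw [hsplit, map_add, hadj, inner_sub_left, inner_gradient_prodMk_left (hfd _),
            sub_eq_add_neg]
end
end

section
/- For every λ ≥ 2 l_{f,1}/μ_g, the function L*_λ(x) := min_y L_λ(x,y) is differentiable in x and its gradient equals ∇L*_λ(x) = ∇_x L_λ(x, y*_λ(x)) = ∇_x f(x, y*_λ(x)) + λ (∇_x g(x, y*_λ(x)) − ∇_x g(x, y*(x))); in particular ∇L*_λ(x) can be evaluated using only first-order derivatives of f and g. -/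
open Set

noncomputable section

open Filter Topology

/-- First-order lower bound for a differentiable strongly convex function. -/
theorem StrongConvexOn.fderiv_add_sq_le {F : Type*} [NormedAddCommGroup F] [NormedSpace ℝ F]
    {φ : F → ℝ} {m : ℝ} (hφ : StrongConvexOn univ m φ) {φ' : F →L[ℝ] ℝ} {y : F}
    (hd : HasFDerivAt φ φ' y) (z : F) :
    φ' (z - y) + m / 2 * ‖z - y‖ ^ 2 ≤ φ z - φ y := by
  have hline : HasDerivAt (fun t : ℝ => φ (y + t • (z - y))) (φ' (z - y)) 0 := by
    have h1 : HasDerivAt (fun t : ℝ => y + t • (z - y)) (z - y) 0 := by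
      simpa using ((hasDerivAt_id (0 : ℝ)).smul_const (z - y)).const_add y
    have h2 : HasFDerivAt φ φ' (y + (0 : ℝ) • (z - y)) := by simpa using hd
    exact h2.comp_hasDerivAt (0 : ℝ) h1
  have hlim : Tendsto (fun t : ℝ => t⁻¹ • (φ (y + t • (z - y)) - φ y)) (𝓝[>] 0)
      (𝓝 (φ' (z - y))) := by
    simpa using hline.tendsto_slope_zero_right
  have hbound : Tendsto (fun t : ℝ => φ z - φ y - (1 - t) * (m / 2 * ‖z - y‖ ^ 2)) (𝓝[>] 0)
      (𝓝 (φ z - φ y - (1 - 0) * (m / 2 * ‖z - y‖ ^ 2))) :=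
    ((by fun_prop : Continuous fun t : ℝ =>
      φ z - φ y - (1 - t) * (m / 2 * ‖z - y‖ ^ 2)).tendsto 0).mono_left nhdsWithin_le_nhds
  have hle := le_of_tendsto_of_tendsto hlim hbound (by
    filter_upwards [Ioo_mem_nhdsGT (zero_lt_one' ℝ)] with t ht
    have hconv := hφ.2 (mem_univ y) (mem_univ z) (sub_nonneg.2 ht.2.le) ht.1.le (by ring)
    have hpt : (1 - t) • y + t • z = y + t • (z - y) := by module
    rw [hpt, norm_sub_rev y z] at hconv
    simp only [smul_eq_mul] at hconv ⊢
    rw [inv_mul_le_iff₀ ht.1]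
    linarith)
  linarith

/-- The gradient of a differentiable strongly convex function is strongly monotone. -/
theorem StrongConvexOn.mul_sq_le_fderiv_sub {F : Type*} [NormedAddCommGroup F] [NormedSpace ℝ F]
    {φ : F → ℝ} {m : ℝ} (hφ : StrongConvexOn univ m φ) {φy φz : F →L[ℝ] ℝ} {y z : F}
    (hy : HasFDerivAt φ φy y) (hz : HasFDerivAt φ φz z) :
    m * ‖z - y‖ ^ 2 ≤ φz (z - y) - φy (z - y) := by
  have h1 := hφ.fderiv_add_sq_le hy z
  have h2 := hφ.fderiv_add_sq_le hz y
  rw [← neg_sub z y, map_neg, norm_neg] at h2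
  linarith

section ValueFunction

variable {E F : Type*} [NormedAddCommGroup E] [NormedSpace ℝ E]
  [NormedAddCommGroup F] [NormedSpace ℝ F]

theorem HasFDerivAt.comp_prodMk_right {h : E × F → ℝ} {h' : E × F →L[ℝ] ℝ} {x : E} {y : F}
    (hd : HasFDerivAt h h' (x, y)) :
    HasFDerivAt (fun y' => h (x, y')) (h'.comp (.inr ℝ E F)) y :=
  hd.comp y (hasFDerivAt_prodMk_right x y)

theorem HasFDerivAt.comp_prodMk_left {h : E × F → ℝ} {h' : E × F →L[ℝ] ℝ} {x : E} {y : F}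
    (hd : HasFDerivAt h h' (x, y)) :
    HasFDerivAt (fun x' => h (x', y)) (h'.comp (.inl ℝ E F)) x :=
  hd.comp x (hasFDerivAt_prodMk_left x y)

theorem fderiv_comp_inr_eq_zero_of_forall_le {h : E × F → ℝ} (hh : Differentiable ℝ h)
    {x : E} {y : F} (hmin : ∀ z, h (x, y) ≤ h (x, z)) :
    (fderiv ℝ h (x, y)).comp (.inr ℝ E F) = 0 :=
  IsLocalMin.hasFDerivAt_eq_zero (f := fun z => h (x, z)) (Eventually.of_forall hmin)
    (hh (x, y)).hasFDerivAt.comp_prodMk_right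

/-- Minimizers over the second variable depend continuously on the first variable when the
partial gradient is strongly monotone. -/
theorem continuousAt_minimizer {h : E × F → ℝ} (hh : ContDiff ℝ 1 h) {m : ℝ} (hm : 0 < m)
    (hmono : ∀ x y z, m * ‖z - y‖ ^ 2 ≤
      fderiv ℝ h (x, z) (0, z - y) - fderiv ℝ h (x, y) (0, z - y))
    {Y : E → F} (hY : ∀ x y, h (x, Y x) ≤ h (x, y)) (x : E) : ContinuousAt Y x := by
  have hdiff : Differentiable ℝ h := hh.differentiable one_ne_zero
  have hbound : ∀ x', ‖Y x' - Y x‖ ≤ m⁻¹ * ‖(fderiv ℝ h (x', Y x)).comp (.inr ℝ E F)‖ := by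
    intro x'
    have hzero := DFunLike.congr_fun
      (fderiv_comp_inr_eq_zero_of_forall_le hdiff (hY x')) (Y x' - Y x)
    have hop := ((fderiv ℝ h (x', Y x)).comp (.inr ℝ E F)).le_opNorm (Y x' - Y x)
    have hmon := hmono x' (Y x) (Y x')
    simp only [ContinuousLinearMap.comp_apply, ContinuousLinearMap.inr_apply,
      zero_apply, Real.norm_eq_abs] at hzero hop
    have habs := neg_abs_le (fderiv ℝ h (x', Y x) (0, Y x' - Y x))
    rw [← div_eq_inv_mul, le_div_iff₀ hm]
    rcases (norm_nonneg (Y x' - Y x)).eq_or_lt with h0 | hpos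
    · rw [← h0, zero_mul]
      exact norm_nonneg _
    · refine le_of_mul_le_mul_right ?_ hpos
      linarith
  have hlim : Tendsto (fun x' => m⁻¹ * ‖(fderiv ℝ h (x', Y x)).comp (.inr ℝ E F)‖) (𝓝 x) (𝓝 0) := by
    have hcont : Continuous fun x' => m⁻¹ * ‖(fderiv ℝ h (x', Y x)).comp (.inr ℝ E F)‖ := by
      have hfc : Continuous fun x' => fderiv ℝ h (x', Y x) :=
        (hh.continuous_fderiv one_ne_zero).comp (by fun_prop)
      exact continuous_const.mul (hfc.clm_comp continuous_const).norm
    simpa [fderiv_comp_inr_eq_zero_of_forall_le hdiff (hY x)] using hcont.tendsto x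
  exact tendsto_iff_norm_sub_tendsto_zero.2
    (squeeze_zero (fun _ => norm_nonneg _) hbound hlim)

/-- Envelope theorem: a value function with a continuous choice of minimizers is differentiable,
and its derivative is the partial derivative at the minimizer. -/
theorem hasFDerivAt_value {h : E × F → ℝ} (hh : ContDiff ℝ 1 h)
    {Y : E → F} (hY : ∀ x y, h (x, Y x) ≤ h (x, y)) {x : E} (hYx : ContinuousAt Y x) :
    HasFDerivAt (fun x' => h (x', Y x')) ((fderiv ℝ h (x, Y x)).comp (.inl ℝ E F)) x := by
  have hstrict : HasStrictFDerivAt h (fderiv ℝ h (x, Y x)) (x, Y x) :=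
    hh.contDiffAt.hasStrictFDerivAt one_ne_zero
  rw [hasFDerivAt_iff_isLittleO, Asymptotics.isLittleO_iff]
  intro c hc
  have hev := Asymptotics.isLittleO_iff.1 hstrict.isLittleO hc
  have hlower : Tendsto (fun x' => ((x', Y x'), (x, Y x'))) (𝓝 x) (𝓝 ((x, Y x), (x, Y x))) :=
    (continuousAt_id.prodMk hYx).prodMk (continuousAt_const.prodMk hYx)
  have hupper : Tendsto (fun x' => ((x', Y x), (x, Y x))) (𝓝 x) (𝓝 ((x, Y x), (x, Y x))) :=
    (by fun_prop : Continuous fun x' : E => ((x', Y x), (x, Y x))).tendsto x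
  filter_upwards [hlower.eventually hev, hupper.eventually hev] with x' hl hu
  have h1 := hY x (Y x')
  have h2 := hY x' (Y x)
  simp only [Prod.mk_sub_mk, sub_self, Prod.norm_mk, norm_zero, norm_nonneg, sup_of_le_left,
    Real.norm_eq_abs, abs_le, ContinuousLinearMap.comp_apply,
    ContinuousLinearMap.inl_apply] at hl hu ⊢
  constructor <;> linarith [hl.1, hl.2, hu.1, hu.2]

theorem mul_sq_le_partial_fderiv_sub {g : E × F → ℝ} (hg : Differentiable ℝ g) {m : ℝ} {x : E}
    (hsc : StrongConvexOn univ m fun y => g (x, y)) (y z : F) :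
    m * ‖z - y‖ ^ 2 ≤ fderiv ℝ g (x, z) (0, z - y) - fderiv ℝ g (x, y) (0, z - y) := by
  simpa using hsc.mul_sq_le_fderiv_sub (hg (x, y)).hasFDerivAt.comp_prodMk_right
    (hg (x, z)).hasFDerivAt.comp_prodMk_right

theorem neg_mul_sq_le_partial_fderiv_sub {f : E × F → ℝ} {l : ℝ}
    (hf : ∀ p q, ‖fderiv ℝ f p - fderiv ℝ f q‖ ≤ l * ‖p - q‖) (x : E) (y z : F) :
    -(l * ‖z - y‖ ^ 2) ≤ fderiv ℝ f (x, z) (0, z - y) - fderiv ℝ f (x, y) (0, z - y) := by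
  have hop := (fderiv ℝ f (x, z) - fderiv ℝ f (x, y)).le_of_opNorm_le (hf (x, z) (x, y)) (0, z - y)
  simp only [Prod.mk_sub_mk, sub_self, Prod.norm_mk, norm_zero, norm_nonneg, sup_of_le_right,
    Real.norm_eq_abs, sub_apply] at hop
  nlinarith [neg_abs_le (fderiv ℝ f (x, z) (0, z - y) - fderiv ℝ f (x, y) (0, z - y))]

/-- If the derivative is constant and a partial minimizer exists for every `x`, then the function
does not depend on the second variable. -/
theorem eq_of_fderiv_const_of_forall_le {f : E × F → ℝ} (hf : Differentiable ℝ f)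
    (hconst : ∀ p q, fderiv ℝ f p = fderiv ℝ f q) {x : E} {w : F}
    (hmin : ∀ y, f (x, w) ≤ f (x, y)) (y z : F) : f (x, y) = f (x, z) := by
  refine is_const_of_fderiv_eq_zero (𝕜 := ℝ) (f := fun y => f (x, y))
    (fun y => (hf (x, y)).hasFDerivAt.comp_prodMk_right.differentiableAt) (fun y => ?_) y z
  rw [(hf (x, y)).hasFDerivAt.comp_prodMk_right.fderiv, hconst (x, y) (x, w)]
  exact fderiv_comp_inr_eq_zero_of_forall_le hf hmin

/-- The penalized value function `x ↦ min_y (f + lam * g)(x, y)` is differentiable, with derivative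
the partial derivative at a minimizer. -/
theorem hasFDerivAt_penalized_value {f g : E × F → ℝ} {l μ lam : ℝ} (hμ : 0 < μ)
    (hf : ContDiff ℝ 1 f) (hfl : ∀ p q, ‖fderiv ℝ f p - fderiv ℝ f q‖ ≤ l * ‖p - q‖)
    (hg : ContDiff ℝ 1 g) (hsc : ∀ x, StrongConvexOn univ μ fun y => g (x, y))
    (hlam : 2 * l / μ ≤ lam) {Y : E → F}
    (hY : ∀ x y, f (x, Y x) + lam * g (x, Y x) ≤ f (x, y) + lam * g (x, y)) (x : E) :
    HasFDerivAt (fun x' => f (x', Y x') + lam * g (x', Y x'))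
      ((fderiv ℝ f (x, Y x) + lam • fderiv ℝ g (x, Y x)).comp (.inl ℝ E F)) x := by
  have hfd : Differentiable ℝ f := hf.differentiable one_ne_zero
  have hgd : Differentiable ℝ g := hg.differentiable one_ne_zero
  have hh : ContDiff ℝ 1 fun p => f p + lam * g p := hf.add (contDiff_const.mul hg)
  have hh' : ∀ p, fderiv ℝ (fun p => f p + lam * g p) p = fderiv ℝ f p + lam • fderiv ℝ g p :=
    fun p => ((hfd p).hasFDerivAt.add ((hgd p).hasFDerivAt.const_mul lam)).fderiv
  rw [div_le_iff₀ hμ] at hlam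
  have key : ∀ m : ℝ, 0 < m → (∀ y z : F, m * ‖z - y‖ ^ 2 ≤ (lam * μ - l) * ‖z - y‖ ^ 2) →
      0 ≤ lam → HasFDerivAt (fun x' => f (x', Y x') + lam * g (x', Y x'))
      ((fderiv ℝ f (x, Y x) + lam • fderiv ℝ g (x, Y x)).comp (.inl ℝ E F)) x := by
    intro m hm hle hlam0
    rw [← hh']
    refine hasFDerivAt_value hh hY (continuousAt_minimizer hh hm (fun x y z => ?_) hY x)
    have h1 := neg_mul_sq_le_partial_fderiv_sub hfl x y z
    have h2 := mul_le_mul_of_nonneg_left (mul_sq_le_partial_fderiv_sub hgd (hsc x) y z) hlam0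
    have h3 := hle y z
    simp only [hh', add_apply, smul_apply, smul_eq_mul]
    linarith
  rcases lt_trichotomy l 0 with hl | rfl | hl
  · have hsub : ∀ p q : E × F, p = q := fun p q => by
      have h0 := (norm_nonneg _).trans (hfl p q)
      exact sub_eq_zero.1 (norm_eq_zero.1 (by nlinarith [norm_nonneg (p - q)]))
    have : Subsingleton E := ⟨fun a b => congrArg Prod.fst (hsub (a, 0) (b, 0))⟩
    convert hasFDerivAt_of_subsingleton _ x using 1
    ext v
    rw [Subsingleton.elim v 0, map_zero, map_zero]
  · have hlam0 : 0 ≤ lam := by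
      by_contra hneg
      nlinarith
    rcases hlam0.eq_or_lt with rfl | hpos
    · have hconst : ∀ p q, fderiv ℝ f p = fderiv ℝ f q := fun p q =>
        sub_eq_zero.1 (norm_le_zero_iff.1 (by simpa using hfl p q))
      have hval : (fun x' => f (x', Y x') + 0 * g (x', Y x')) = fun x' => f (x', Y x) := by
        ext x'
        rw [zero_mul, add_zero]
        exact eq_of_fderiv_const_of_forall_le hfd hconst
          (fun y => by simpa using hY x' y) _ _
      rw [hval, zero_smul, add_zero]
      exact (hfd (x, Y x)).hasFDerivAt.comp_prodMk_left
    · exact key (lam * μ) (by positivity) (fun y z => by simp) hlam0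
  · have hpos : 0 < lam := by
      by_contra hneg
      nlinarith
    exact key l hl (fun y z => by gcongr; linarith) hpos.le

end ValueFunction

theorem lagrangian_value_gradient
    (dx dy : ℕ)
    (f g : EuclideanSpace ℝ (Fin dx) × EuclideanSpace ℝ (Fin dy) → ℝ)
    (lf1 lg1 μg : ℝ)
    (hμg : 0 < μg)
    (hf : ContDiff ℝ 2 f)
    (hf1 : ∀ p q, ‖fderiv ℝ f p - fderiv ℝ f q‖ ≤ lf1 * ‖p - q‖)
    (hg : ContDiff ℝ 2 g)
    (hg1 : ∀ p q, ‖fderiv ℝ g p - fderiv ℝ g q‖ ≤ lg1 * ‖p - q‖)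
    (hsc : ∀ x, StrongConvexOn univ μg (fun y => g (x, y)))
    (ystar : EuclideanSpace ℝ (Fin dx) → EuclideanSpace ℝ (Fin dy))
    (hystar : ∀ x y, g (x, ystar x) ≤ g (x, y))
    (ystarlam : ℝ → EuclideanSpace ℝ (Fin dx) → EuclideanSpace ℝ (Fin dy))
    (hystarlam : ∀ lam x, 2 * lf1 / μg ≤ lam → ∀ y,
      f (x, ystarlam lam x) + lam * (g (x, ystarlam lam x) - g (x, ystar x)) ≤
      f (x, y) + lam * (g (x, y) - g (x, ystar x))) :
    ∀ lam : ℝ, 2 * lf1 / μg ≤ lam →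
      ∀ x : EuclideanSpace ℝ (Fin dx),
        HasGradientAt
          (fun x' => f (x', ystarlam lam x') + lam * (g (x', ystarlam lam x') - g (x', ystar x')))
          (gradient (fun x' => f (x', ystarlam lam x)) x +
            lam • (gradient (fun x' => g (x', ystarlam lam x)) x -
              gradient (fun x' => g (x', ystar x)) x)) x := by
  intro lam hlam x
  have hf' : ContDiff ℝ 1 f := hf.of_le one_le_two
  have hg' : ContDiff ℝ 1 g := hg.of_le one_le_two
  have hfd : Differentiable ℝ f := hf'.differentiable one_ne_zero
  have hgd : Differentiable ℝ g := hg'.differentiable one_ne_zero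
  have hpen := hasFDerivAt_penalized_value hμg hf' hf1 hg' hsc hlam (Y := ystarlam lam)
    (fun x y => by linarith [hystarlam lam x hlam y]) x
  have hlow := hasFDerivAt_value hg' hystar (continuousAt_minimizer hg' hμg
    (fun x y z => mul_sq_le_partial_fderiv_sub hgd (hsc x) y z) hystar x)
  have hgrad := hpen.sub (hlow.const_mul lam)
  have hgradient : ∀ {φ : EuclideanSpace ℝ (Fin dx) × EuclideanSpace ℝ (Fin dy) → ℝ},
      Differentiable ℝ φ → ∀ y, InnerProductSpace.toDual ℝ _ (gradient (fun x' => φ (x', y)) x) =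
        (fderiv ℝ φ (x, y)).comp (.inl ℝ _ _) := fun hφ y => by
    rw [gradient, LinearIsometryEquiv.apply_symm_apply,
      (hφ (x, y)).hasFDerivAt.comp_prodMk_left.fderiv]
  rw [hasGradientAt_iff_hasFDerivAt]
  refine (hgrad.congr_fderiv ?_).congr_of_eventuallyEq (.of_forall fun x' => ?_)
  · rw [map_add, map_smulₛₗ, map_sub, hgradient hfd, hgradient hgd, hgradient hgd]
    simp only [ContinuousLinearMap.add_comp, ContinuousLinearMap.smul_comp, smul_sub,
      add_sub_assoc, conj_trivial]
  · simp only [Pi.sub_apply]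
    ring
end
end

section
/- For any x ∈ ℝ^{d_x}, y ∈ ℝ^{d_y}, and λ > 0, the following Hessian-corrected relation between the hyper-gradient and the Lagrangian gradients holds: ‖∇F(x) − ∇_x L_λ(x,y) + [∇²_{xy} g(x, y*(x))]ᵀ [∇²_{yy} g(x, y*(x))]^{-1} ∇_y L_λ(x,y)‖ ≤ 2 (l_{g,1}/μ_g) ‖y − y*(x)‖ (l_{f,1} + λ · min(2 l_{g,1}, l_{g,2} ‖y − y*(x)‖)). -/
open Set
open scoped RealInnerProductSpace

noncomputable section

section Partial

variable {E F : Type*} [NormedAddCommGroup E] [InnerProductSpace ℝ E]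
  [NormedAddCommGroup F] [InnerProductSpace ℝ F]

theorem inner_gradient_fst [CompleteSpace E] {f : E × F → ℝ} (hf : Differentiable ℝ f) (x : E)
    (y : F) (u : E) :
    ⟪gradient (fun x' => f (x', y)) x, u⟫ = fderiv ℝ f (x, y) (u, 0) := by
  have h : HasFDerivAt (fun x' => f (x', y))
      ((fderiv ℝ f (x, y)).comp (ContinuousLinearMap.inl ℝ E F)) x :=
    (hf (x, y)).hasFDerivAt.comp x (hasFDerivAt_prodMk_left x y)
  rw [gradient, h.fderiv, InnerProductSpace.toDual_symm_apply]
  simp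

theorem fderiv_partial_snd {g : E × F → ℝ} (hg : Differentiable ℝ g) (x : E) (y w : F) :
    fderiv ℝ (fun y' => g (x, y')) y w = fderiv ℝ g (x, y) (0, w) := by
  have h : HasFDerivAt (fun y' => g (x, y'))
      ((fderiv ℝ g (x, y)).comp (ContinuousLinearMap.inr ℝ E F)) y :=
    (hg (x, y)).hasFDerivAt.comp y (hasFDerivAt_prodMk_right x y)
  rw [h.fderiv]
  simp

theorem inner_gradient_snd [CompleteSpace F] {f : E × F → ℝ} (hf : Differentiable ℝ f) (x : E)
    (y w : F) : ⟪gradient (fun y' => f (x, y')) y, w⟫ = fderiv ℝ f (x, y) (0, w) := by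
  rw [gradient, InnerProductSpace.toDual_symm_apply, fderiv_partial_snd hf]

/-- A vector representing the restriction of `T` to the first factor has norm at most `‖T‖`. -/
theorem norm_le_of_inner_eq_fst {a : E} {T : E × F →L[ℝ] ℝ} (h : ∀ u, ⟪a, u⟫ = T (u, 0)) :
    ‖a‖ ≤ ‖T‖ := by
  have h1 : ‖a‖ * ‖a‖ ≤ ‖T‖ * ‖a‖ := by
    rw [← real_inner_self_eq_norm_mul_norm, h]
    simpa using (le_abs_self _).trans (T.le_opNorm (a, 0))
  rcases (norm_nonneg a).eq_or_lt with h0 | h0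
  · rw [← h0]; positivity
  · exact le_of_mul_le_mul_right h1 h0

/-- A vector representing the restriction of `T` to the second factor has norm at most `‖T‖`. -/
theorem norm_le_of_inner_eq_snd {a : F} {T : E × F →L[ℝ] ℝ} (h : ∀ w, ⟪a, w⟫ = T (0, w)) :
    ‖a‖ ≤ ‖T‖ := by
  have h1 : ‖a‖ * ‖a‖ ≤ ‖T‖ * ‖a‖ := by
    rw [← real_inner_self_eq_norm_mul_norm, h]
    simpa using (le_abs_self _).trans (T.le_opNorm (0, a))
  rcases (norm_nonneg a).eq_or_lt with h0 | h0
  · rw [← h0]; positivity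
  · exact le_of_mul_le_mul_right h1 h0

/-- First-order lower bound for a differentiable strongly convex function. -/
theorem StrongConvexOn.add_fderiv_le {h : F → ℝ} {m : ℝ} (hc : StrongConvexOn univ m h)
    {y : F} (hd : DifferentiableAt ℝ h y) (z : F) :
    h y + fderiv ℝ h y (z - y) + m / 2 * ‖z - y‖ ^ 2 ≤ h z := by
  have hline : HasDerivAt (fun t : ℝ => h (y + t • (z - y))) (fderiv ℝ h y (z - y)) 0 := by
    have h1 : HasDerivAt (fun t : ℝ => y + t • (z - y)) (z - y) 0 := by
      simpa using ((hasDerivAt_id (0 : ℝ)).smul_const (z - y)).const_add y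
    have h2 : HasFDerivAt h (fderiv ℝ h y) (y + (0 : ℝ) • (z - y)) := by
      simpa using hd.hasFDerivAt
    exact h2.comp_hasDerivAt 0 h1
  have hslope := hline.tendsto_slope_zero_right
  have hr : Filter.Tendsto (fun t : ℝ => h z - h y - (1 - t) * (m / 2 * ‖z - y‖ ^ 2))
      (nhdsWithin 0 (Ioi 0)) (nhds (h z - h y - (1 - 0) * (m / 2 * ‖z - y‖ ^ 2))) :=
    (Continuous.tendsto (by fun_prop) 0).mono_left nhdsWithin_le_nhds
  have key := le_of_tendsto_of_tendsto hslope hr (by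
    filter_upwards [Ioo_mem_nhdsGT (zero_lt_one' ℝ)] with t ht
    have hconv := hc.2 (mem_univ y) (mem_univ z) (sub_nonneg.2 ht.2.le) ht.1.le (by ring)
    have e : (1 - t) • y + t • z = y + t • (z - y) := by module
    rw [e, norm_sub_rev] at hconv
    simp only [smul_eq_mul, zero_add, zero_smul, add_zero] at hconv ⊢
    rw [inv_mul_le_iff₀ ht.1]
    linarith)
  linarith

/-- The gradient of a differentiable strongly convex function is strongly monotone. -/
theorem StrongConvexOn.mul_sq_le_fderiv_sub_s9 {h : F → ℝ} {m : ℝ} (hc : StrongConvexOn univ m h)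
    (hd : Differentiable ℝ h) (y z : F) :
    m * ‖z - y‖ ^ 2 ≤ fderiv ℝ h z (z - y) - fderiv ℝ h y (z - y) := by
  have h1 := hc.add_fderiv_le (hd y) z
  have h2 := hc.add_fderiv_le (hd z) y
  rw [norm_sub_rev, ← neg_sub z y, map_neg] at h2
  linarith

/-- The partial gradient of a partially strongly convex function is strongly monotone. -/
theorem mul_sq_le_fderiv_partial_sub {g : E × F → ℝ} {m : ℝ} (hg : Differentiable ℝ g)
    (hsc : ∀ x, StrongConvexOn univ m (fun y => g (x, y))) (x : E) (y z : F) :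
    m * ‖z - y‖ ^ 2 ≤ fderiv ℝ g (x, z) (0, z - y) - fderiv ℝ g (x, y) (0, z - y) := by
  have hd : Differentiable ℝ (fun y => g (x, y)) := by fun_prop
  have h := (hsc x).mul_sq_le_fderiv_sub_s9 hd y z
  rwa [fderiv_partial_snd hg, fderiv_partial_snd hg] at h

/-- The partial Hessian of a partially strongly convex function is coercive. -/
theorem mul_sq_le_fderiv_fderiv {g : E × F → ℝ} {m : ℝ} (hg : ContDiff ℝ 2 g)
    (hsc : ∀ x, StrongConvexOn univ m (fun y => g (x, y))) (x : E) (y v : F) :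
    m * ‖v‖ ^ 2 ≤ fderiv ℝ (fderiv ℝ g) (x, y) (0, v) (0, v) := by
  have hg1 : Differentiable ℝ g := hg.differentiable (by norm_num)
  have hg2 : Differentiable ℝ (fderiv ℝ g) :=
    (hg.fderiv_right (m := 1) (by norm_num)).differentiable (by norm_num)
  have hline : HasDerivAt (fun t : ℝ => fderiv ℝ g (x, y + t • v) (0, v))
      (fderiv ℝ (fderiv ℝ g) (x, y) (0, v) (0, v)) 0 := by
    have h1 : HasDerivAt (fun t : ℝ => ((x, y + t • v) : E × F)) (0, v) 0 := by
      refine (hasDerivAt_const (0 : ℝ) x).prodMk ?_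
      simpa using ((hasDerivAt_id (0 : ℝ)).smul_const v).const_add y
    have h2 : HasFDerivAt (fderiv ℝ g) (fderiv ℝ (fderiv ℝ g) (x, y)) (x, y + (0 : ℝ) • v) := by
      simpa using (hg2 (x, y)).hasFDerivAt
    exact (ContinuousLinearMap.apply ℝ ℝ ((0, v) : E × F)).hasFDerivAt.comp_hasDerivAt 0
      (h2.comp_hasDerivAt 0 h1)
  refine ge_of_tendsto hline.tendsto_slope_zero_right ?_
  filter_upwards [self_mem_nhdsWithin] with t ht
  have ht' : (0 : ℝ) < t := ht
  have h := mul_sq_le_fderiv_partial_sub hg1 hsc x y (y + t • v)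
  have e : ((0, t • v) : E × F) = t • (0, v) := by simp
  rw [add_sub_cancel_left, e, map_smul, map_smul, norm_smul, Real.norm_of_nonneg ht'.le] at h
  simp only [smul_eq_mul, zero_add, zero_smul, add_zero] at h ⊢
  rw [le_inv_mul_iff₀ ht']
  nlinarith

/-- The partial derivative vanishes at a partial minimizer. -/
theorem fderiv_snd_eq_zero_of_isMin {g : E × F → ℝ} (hg : Differentiable ℝ g) {x : E} {y : F}
    (hmin : ∀ z, g (x, y) ≤ g (x, z)) (w : F) : fderiv ℝ g (x, y) (0, w) = 0 := by
  have h : IsLocalMin (fun y' => g (x, y')) y := Filter.Eventually.of_forall hmin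
  rw [← fderiv_partial_snd hg, h.fderiv_eq_zero]
  simp

/-- Derivative of the solution map of a strongly convex parametric minimization problem. -/
theorem hasFDerivAt_argmin {g : E × F → ℝ} {m : ℝ} (hm : 0 < m) (hg : ContDiff ℝ 2 g)
    (hsc : ∀ x, StrongConvexOn univ m (fun y => g (x, y))) {ystar : E → F}
    (hystar : ∀ x y, g (x, ystar x) ≤ g (x, y)) {x : E} {A : E →L[ℝ] F}
    (hA : ∀ u w, fderiv ℝ (fderiv ℝ g) (x, ystar x) (u, A u) (0, w) = 0) :
    HasFDerivAt ystar A x := by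
  have hg1 : Differentiable ℝ g := hg.differentiable (by norm_num)
  have hg2 : Differentiable ℝ (fderiv ℝ g) :=
    (hg.fderiv_right (m := 1) (by norm_num)).differentiable (by norm_num)
  let c : E → F := fun x' => ystar x + A (x' - x)
  let Φ : E → F →L[ℝ] ℝ := fun x' =>
    (fderiv ℝ g (x', c x')).comp (ContinuousLinearMap.inr ℝ E F)
  have hc : HasFDerivAt (fun x' => (x', c x')) ((ContinuousLinearMap.id ℝ E).prod A) x := by
    refine (hasFDerivAt_id x).prodMk ?_
    simpa [c] using (A.hasFDerivAt.comp x ((hasFDerivAt_id x).sub_const x)).const_add (ystar x)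
  have hcx : c x = ystar x := by simp [c]
  have hΦ : HasFDerivAt Φ (0 : E →L[ℝ] F →L[ℝ] ℝ) x := by
    have h1 : HasFDerivAt (fderiv ℝ g) (fderiv ℝ (fderiv ℝ g) (x, ystar x)) (x, c x) := by
      rw [hcx]; exact (hg2 _).hasFDerivAt
    have h2 := ((ContinuousLinearMap.compL ℝ F (E × F) ℝ).flip
      (ContinuousLinearMap.inr ℝ E F)).hasFDerivAt.comp x (h1.comp x hc)
    refine h2.congr_fderiv ?_
    ext u w
    simpa using hA u w
  have hΦx : Φ x = 0 := by
    ext w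
    simpa [Φ, hcx] using fderiv_snd_eq_zero_of_isMin hg1 (hystar x) w
  have hbound : ∀ x', m * ‖ystar x' - c x'‖ ≤ ‖Φ x'‖ := by
    intro x'
    have h := mul_sq_le_fderiv_partial_sub hg1 hsc x' (ystar x') (c x')
    rw [fderiv_snd_eq_zero_of_isMin hg1 (hystar x'), sub_zero] at h
    have h' : fderiv ℝ g (x', c x') (0, c x' - ystar x') ≤ ‖Φ x'‖ * ‖c x' - ystar x'‖ := by
      simpa [Φ] using (le_abs_self _).trans ((Φ x').le_opNorm (c x' - ystar x'))
    rw [norm_sub_rev]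
    rcases (norm_nonneg (c x' - ystar x')).eq_or_lt with h0 | h0
    · rw [← h0]; simp
    · refine le_of_mul_le_mul_right ?_ h0
      linarith
  rw [hasFDerivAt_iff_isLittleO] at hΦ ⊢
  refine Asymptotics.IsBigO.trans_isLittleO ?_ hΦ
  refine Asymptotics.IsBigO.of_bound m⁻¹ (Filter.Eventually.of_forall fun x' => ?_)
  rw [le_inv_mul_iff₀ hm]
  simpa [hΦx, c, sub_sub] using hbound x'

/-- The implicit-function formula for the hyper-gradient. -/
theorem gradient_argmin_comp [CompleteSpace E] [CompleteSpace F] {f g : E × F → ℝ} {m : ℝ}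
    (hm : 0 < m) (hf : Differentiable ℝ f)
    (hg : ContDiff ℝ 2 g) (hsc : ∀ x, StrongConvexOn univ m (fun y => g (x, y))) {ystar : E → F}
    (hystar : ∀ x y, g (x, ystar x) ≤ g (x, y)) {x : E} {Hyy Hinv : F →L[ℝ] F} {Hxy : F →L[ℝ] E}
    (hHyy : ∀ v w, ⟪Hyy v, w⟫ = fderiv ℝ (fderiv ℝ g) (x, ystar x) (0, v) (0, w))
    (hHxy : ∀ v u, ⟪Hxy v, u⟫ = fderiv ℝ (fderiv ℝ g) (x, ystar x) (u, 0) (0, v))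
    (hright : ∀ v, Hyy (Hinv v) = v) :
    gradient (fun x' => f (x', ystar x')) x =
      gradient (fun x' => f (x', ystar x)) x -
        Hxy (Hinv (gradient (fun y' => f (x, y')) (ystar x))) := by
  have hsymm : IsSymmSndFDerivAt ℝ g (x, ystar x) :=
    hg.contDiffAt.isSymmSndFDerivAt (by simp)
  let A : E →L[ℝ] F := -(Hinv.comp (ContinuousLinearMap.adjoint Hxy))
  have hyyA : ∀ u w, ⟪Hyy (A u), w⟫ = -⟪Hxy w, u⟫ := by
    intro u w
    simp only [A, neg_apply, ContinuousLinearMap.comp_apply, map_neg, hright,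
      inner_neg_left, ContinuousLinearMap.adjoint_inner_left]
    rw [real_inner_comm]
  have hyy_symm : ∀ v w, ⟪Hyy v, w⟫ = ⟪Hyy w, v⟫ := fun v w => by
    rw [hHyy, hHyy, hsymm.eq]
  have hA : HasFDerivAt ystar A x := by
    refine hasFDerivAt_argmin hm hg hsc hystar fun u w => ?_
    have e : ((u, A u) : E × F) = (u, 0) + (0, A u) := by simp
    rw [e, map_add, add_apply, ← hHxy, ← hHyy, hyyA]
    ring
  have hF : HasFDerivAt (fun x' => f (x', ystar x'))
      ((fderiv ℝ f (x, ystar x)).comp ((ContinuousLinearMap.id ℝ E).prod A)) x :=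
    (hf (x, ystar x)).hasFDerivAt.comp x ((hasFDerivAt_id x).prodMk hA)
  refine ext_inner_right ℝ fun u => ?_
  have e : ((u, A u) : E × F) = (u, 0) + (0, A u) := by simp
  rw [inner_sub_left, inner_gradient_fst hf, gradient, hF.fderiv,
    InnerProductSpace.toDual_symm_apply]
  simp only [ContinuousLinearMap.comp_apply, ContinuousLinearMap.prod_apply,
    ContinuousLinearMap.id_apply]
  rw [e, map_add, ← inner_gradient_snd hf]
  have h := hyyA u (Hinv (gradient (fun y' => f (x, y')) (ystar x)))
  rw [hyy_symm, hright] at h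
  linarith

/-- Two bounds for the first-order Taylor remainder of a map with Lipschitz derivative. -/
theorem norm_taylor_remainder_le {G H : Type*} [NormedAddCommGroup G] [NormedSpace ℝ G]
    [NormedAddCommGroup H] [NormedSpace ℝ H] {φ : G → H} (hφ : Differentiable ℝ φ)
    {L M : ℝ} (hL : 0 ≤ L) (hM : 0 ≤ M) (h1 : ∀ p q, ‖φ p - φ q‖ ≤ L * ‖p - q‖)
    (h2 : ∀ p q, ‖fderiv ℝ φ p - fderiv ℝ φ q‖ ≤ M * ‖p - q‖) (p q : G) :
    ‖φ q - φ p - fderiv ℝ φ p (q - p)‖ ≤ min (2 * L) (M * ‖q - p‖) * ‖q - p‖ := by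
  rw [min_mul_of_nonneg _ _ (norm_nonneg _)]
  refine le_min ?_ ?_
  · have hd : ‖fderiv ℝ φ p‖ ≤ L :=
      (hφ p).hasFDerivAt.le_of_lip' hL (Filter.Eventually.of_forall fun z => h1 z p)
    have := (fderiv ℝ φ p).le_of_opNorm_le hd (q - p)
    have := norm_sub_le (φ q - φ p) (fderiv ℝ φ p (q - p))
    linarith [h1 q p]
  · refine (convex_closedBall p ‖q - p‖).norm_image_sub_le_of_norm_fderiv_le'
      (fun z _ => hφ z) (fun z hz => ?_) (Metric.mem_closedBall_self (norm_nonneg _))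
      (by simp [dist_eq_norm])
    refine (h2 z p).trans (mul_le_mul_of_nonneg_left ?_ hM)
    simpa [dist_eq_norm] using hz

end Partial

theorem hessian_corrected_gradient_relation
    (dx dy : ℕ)
    (f g : EuclideanSpace ℝ (Fin dx) × EuclideanSpace ℝ (Fin dy) → ℝ)
    (lf0 lf1 lg1 lg2 μg : ℝ)
    (hμg : 0 < μg)
    (hf : ContDiff ℝ 1 f)
    (hf1 : ∀ p q, ‖fderiv ℝ f p - fderiv ℝ f q‖ ≤ lf1 * ‖p - q‖)
    (hg : ContDiff ℝ 2 g)
    (hg1 : ∀ p q, ‖fderiv ℝ g p - fderiv ℝ g q‖ ≤ lg1 * ‖p - q‖)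
    (hg2 : ∀ p q, ‖fderiv ℝ (fderiv ℝ g) p - fderiv ℝ (fderiv ℝ g) q‖ ≤ lg2 * ‖p - q‖)
    (hfy0 : ∀ x y, ‖gradient (fun y' => f (x, y')) y‖ ≤ lf0)
    (hsc : ∀ x, StrongConvexOn univ μg (fun y => g (x, y)))
    (ystar : EuclideanSpace ℝ (Fin dx) → EuclideanSpace ℝ (Fin dy))
    (hystar : ∀ x y, g (x, ystar x) ≤ g (x, y)) :
    ∀ (x : EuclideanSpace ℝ (Fin dx)) (y : EuclideanSpace ℝ (Fin dy)) (lam : ℝ), 0 < lam →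
    ∀ (Hyy : EuclideanSpace ℝ (Fin dy) →L[ℝ] EuclideanSpace ℝ (Fin dy))
      (Hxy : EuclideanSpace ℝ (Fin dy) →L[ℝ] EuclideanSpace ℝ (Fin dx))
      (Hinv : EuclideanSpace ℝ (Fin dy) →L[ℝ] EuclideanSpace ℝ (Fin dy)),
      (∀ v w : EuclideanSpace ℝ (Fin dy),
        ⟪Hyy v, w⟫ = fderiv ℝ (fderiv ℝ g) (x, ystar x) (0, v) (0, w)) →
      (∀ (v : EuclideanSpace ℝ (Fin dy)) (u : EuclideanSpace ℝ (Fin dx)),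
        ⟪Hxy v, u⟫ = fderiv ℝ (fderiv ℝ g) (x, ystar x) (u, 0) (0, v)) →
      Hyy.comp Hinv = ContinuousLinearMap.id ℝ (EuclideanSpace ℝ (Fin dy)) →
      Hinv.comp Hyy = ContinuousLinearMap.id ℝ (EuclideanSpace ℝ (Fin dy)) →
      ‖gradient (fun x' => f (x', ystar x')) x -
          (gradient (fun x' => f (x', y)) x +
            lam • (gradient (fun x' => g (x', y)) x - gradient (fun x' => g (x', ystar x)) x)) +
          Hxy (Hinv (gradient (fun y' => f (x, y')) y +
            lam • gradient (fun y' => g (x, y')) y))‖ ≤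
        2 * (lg1 / μg) * ‖y - ystar x‖ *
          (lf1 + lam * min (2 * lg1) (lg2 * ‖y - ystar x‖)) := by
  intro x y lam hlam Hyy Hxy Hinv hHyy hHxy hr hl
  have hright : ∀ v, Hyy (Hinv v) = v := DFunLike.congr_fun hr
  have hleft : ∀ v, Hinv (Hyy v) = v := DFunLike.congr_fun hl
  have hfd : Differentiable ℝ f := hf.differentiable (by norm_num)
  have hgd : Differentiable ℝ g := hg.differentiable (by norm_num)
  have hgd2 : Differentiable ℝ (fderiv ℝ g) :=
    (hg.fderiv_right (m := 1) (by norm_num)).differentiable (by norm_num)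
  have hsymm : IsSymmSndFDerivAt ℝ g (x, ystar x) :=
    hg.contDiffAt.isSymmSndFDerivAt (by simp)
  have hgy : gradient (fun y' => g (x, y')) (ystar x) = 0 := by
    refine ext_inner_right ℝ fun w => ?_
    rw [inner_gradient_snd hgd, fderiv_snd_eq_zero_of_isMin hgd (hystar x), inner_zero_left]
  rw [gradient_argmin_comp hμg hfd hg hsc hystar hHyy hHxy hright]
  rcases eq_or_ne y (ystar x) with rfl | hne
  · simp [hgy]
  have hrpos : 0 < ‖y - ystar x‖ := norm_pos_iff.2 (sub_ne_zero.2 hne)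
  set v := y - ystar x with hv
  have hdiff : (x, y) - (x, ystar x) = ((0, v) : _ × _) := by simp [hv]
  have hdiff_norm : ‖(x, y) - (x, ystar x)‖ = ‖v‖ := by rw [hdiff]; simp
  have coeff_nonneg {c : ℝ} (h : 0 ≤ c * ‖(x, y) - (x, ystar x)‖) : 0 ≤ c := by
    rw [hdiff_norm] at h
    exact nonneg_of_mul_nonneg_left h hrpos
  have hlf1 : 0 ≤ lf1 := coeff_nonneg (le_trans (by positivity) (hf1 _ _))
  have hlg1 : 0 ≤ lg1 := coeff_nonneg (le_trans (by positivity) (hg1 _ _))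
  have hlg2 : 0 ≤ lg2 := coeff_nonneg (le_trans (by positivity) (hg2 _ _))
  have hD2 : ‖fderiv ℝ (fderiv ℝ g) (x, ystar x)‖ ≤ lg1 :=
    (hgd2 _).hasFDerivAt.le_of_lip' hlg1 (Filter.Eventually.of_forall fun z => hg1 z _)
  have hHxy_norm : ∀ w, ‖Hxy w‖ ≤ lg1 * ‖w‖ := by
    intro w
    have h := norm_le_of_inner_eq_fst (a := Hxy w)
      (T := fderiv ℝ (fderiv ℝ g) (x, ystar x) (0, w))
      (fun u => by rw [hHxy, hsymm.eq])
    simpa using h.trans ((fderiv ℝ (fderiv ℝ g) (x, ystar x)).le_of_opNorm_le hD2 (0, w))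
  have hcoer : ∀ w, μg * ‖w‖ ≤ ‖Hyy w‖ := by
    intro w
    have h := mul_sq_le_fderiv_fderiv hg hsc x (ystar x) w
    rw [← hHyy] at h
    have h' := real_inner_le_norm (Hyy w) w
    rcases (norm_nonneg w).eq_or_lt with h0 | h0
    · rw [← h0]; simp
    · refine le_of_mul_le_mul_right ?_ h0
      linarith
  have hratio : 1 ≤ lg1 / μg := by
    rw [one_le_div hμg]
    have h := norm_le_of_inner_eq_snd (a := Hyy v)
      (T := fderiv ℝ (fderiv ℝ g) (x, ystar x) (0, v)) (hHyy v)
    have h' : ‖Hyy v‖ ≤ lg1 * ‖v‖ := by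
      simpa using h.trans ((fderiv ℝ (fderiv ℝ g) (x, ystar x)).le_of_opNorm_le hD2 (0, v))
    exact le_of_mul_le_mul_right ((hcoer v).trans h') hrpos
  have hcorr : ∀ w, ‖Hxy (Hinv w)‖ ≤ lg1 / μg * ‖w‖ := by
    intro w
    have h := hcoer (Hinv w)
    rw [hright, mul_comm, ← le_div_iff₀ hμg] at h
    calc ‖Hxy (Hinv w)‖ ≤ lg1 * ‖Hinv w‖ := hHxy_norm _
      _ ≤ lg1 * (‖w‖ / μg) := by gcongr
      _ = lg1 / μg * ‖w‖ := by ring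
  set K := min (2 * lg1) (lg2 * ‖v‖) with hK
  have hK0 : 0 ≤ K := by positivity
  have hTaylor : ‖fderiv ℝ g (x, y) - fderiv ℝ g (x, ystar x) -
      fderiv ℝ (fderiv ℝ g) (x, ystar x) (0, v)‖ ≤ K * ‖v‖ := by
    have h := norm_taylor_remainder_le hgd2 hlg1 hlg2 hg1 hg2 (x, ystar x) (x, y)
    rwa [hdiff_norm, hdiff] at h
  have hfdiff : ‖fderiv ℝ f (x, y) - fderiv ℝ f (x, ystar x)‖ ≤ lf1 * ‖v‖ := by
    simpa only [hdiff_norm] using hf1 (x, y) (x, ystar x)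
  set fx := gradient (fun x' => f (x', y)) x with hfx
  set fxs := gradient (fun x' => f (x', ystar x)) x with hfxs
  set gx := gradient (fun x' => g (x', y)) x with hgx
  set gxs := gradient (fun x' => g (x', ystar x)) x with hgxs
  set fy := gradient (fun y' => f (x, y')) y with hfy
  set fys := gradient (fun y' => f (x, y')) (ystar x) with hfys
  set gy := gradient (fun y' => g (x, y')) y with hgy'
  have b1 : ‖fx - fxs‖ ≤ lf1 * ‖v‖ := (norm_le_of_inner_eq_fst fun u => by
    rw [inner_sub_left, hfx, hfxs, inner_gradient_fst hfd, inner_gradient_fst hfd,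
      sub_apply]).trans hfdiff
  have b2 : ‖gx - gxs - Hxy v‖ ≤ K * ‖v‖ := (norm_le_of_inner_eq_fst fun u => by
    rw [inner_sub_left, inner_sub_left, hgx, hgxs, inner_gradient_fst hgd,
      inner_gradient_fst hgd, hHxy, hsymm.eq, sub_apply,
      sub_apply]).trans hTaylor
  have b3 : ‖fy - fys‖ ≤ lf1 * ‖v‖ := (norm_le_of_inner_eq_snd fun w => by
    rw [inner_sub_left, hfy, hfys, inner_gradient_snd hfd, inner_gradient_snd hfd,
      sub_apply]).trans hfdiff
  have b4 : ‖gy - Hyy v‖ ≤ K * ‖v‖ := (norm_le_of_inner_eq_snd fun w => by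
    rw [inner_sub_left, hgy', inner_gradient_snd hgd, hHyy, sub_apply,
      sub_apply, fderiv_snd_eq_zero_of_isMin hgd (hystar x),
      sub_zero]).trans hTaylor
  have hdecomp : fxs - Hxy (Hinv fys) - (fx + lam • (gx - gxs)) + Hxy (Hinv (fy + lam • gy)) =
      Hxy (Hinv (fy - fys)) - (fx - fxs) +
        lam • (Hxy (Hinv (gy - Hyy v)) - (gx - gxs - Hxy v)) := by
    simp only [map_add, map_sub, map_smul, hleft]
    module
  rw [hdecomp]
  have hsum {b : EuclideanSpace ℝ (Fin dx)} {w : EuclideanSpace ℝ (Fin dy)} {C : ℝ}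
      (hC : 0 ≤ C) (hw : ‖w‖ ≤ C) (hb : ‖b‖ ≤ C) :
      ‖Hxy (Hinv w) - b‖ ≤ 2 * (lg1 / μg) * C := by
    have h1 : lg1 / μg * ‖w‖ ≤ lg1 / μg * C := by gcongr
    have h2 : C ≤ lg1 / μg * C := le_mul_of_one_le_left hC hratio
    linarith [norm_sub_le (Hxy (Hinv w)) b, hcorr w]
  calc _ ≤ ‖Hxy (Hinv (fy - fys)) - (fx - fxs)‖ +
        lam * ‖Hxy (Hinv (gy - Hyy v)) - (gx - gxs - Hxy v)‖ := by
        refine (norm_add_le _ _).trans_eq ?_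
        rw [norm_smul, Real.norm_of_nonneg hlam.le]
    _ ≤ 2 * (lg1 / μg) * (lf1 * ‖v‖) + lam * (2 * (lg1 / μg) * (K * ‖v‖)) := by
        gcongr
        · exact hsum (by positivity) b3 b1
        · exact hsum (by positivity) b4 b2
    _ = 2 * (lg1 / μg) * ‖v‖ * (lf1 + lam * K) := by ring
end
end

section
/- For every λ > 2 l_{f,1}/μ_g, the map x ↦ y*_λ(x) is differentiable and its derivative is Lipschitz: for all x₁, x₂ ∈ ℝ^{d_x}, ‖∇y*_λ(x₁) − ∇y*_λ(x₂)‖ ≤ l_{λ,1} ‖x₁ − x₂‖ with l_{λ,1} ≤ 32 (l_{g,2} + l_{f,2}/λ) l_{g,1}²/μ_g³. -/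
open Set

noncomputable section

open Filter Topology Asymptotics ContinuousLinearMap

section Convexity

variable {E : Type*} [NormedAddCommGroup E] [NormedSpace ℝ E]

theorem StrongConvexOn.add_fderiv_le_s10 {m : ℝ} {φ : E → ℝ} {φ' : E →L[ℝ] ℝ} {x : E}
    (hφ : StrongConvexOn univ m φ) (hd : HasFDerivAt φ φ' x) (y : E) :
    φ x + φ' (y - x) + m / 2 * ‖y - x‖ ^ 2 ≤ φ y := by
  have hlim : Tendsto (fun c : ℝ => φ y - φ x - (1 - c⁻¹) * (m / 2 * ‖y - x‖ ^ 2)) atTop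
      (𝓝 (φ y - φ x - (1 - 0) * (m / 2 * ‖y - x‖ ^ 2))) :=
    tendsto_const_nhds.sub ((tendsto_const_nhds.sub tendsto_inv_atTop_zero).mul_const _)
  have key := le_of_tendsto_of_tendsto (hd.lim_real (y - x)) hlim ?_
  · linarith
  filter_upwards [eventually_ge_atTop (1 : ℝ)] with c hc
  have hc0 : 0 < c := by linarith
  have hcinv : c⁻¹ ≤ 1 := inv_le_one_of_one_le₀ hc
  have h := hφ.2 (mem_univ x) (mem_univ y) (sub_nonneg.2 hcinv) (inv_nonneg.2 hc0.le)
    (sub_add_cancel 1 c⁻¹)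
  have hpt : (1 - c⁻¹) • x + c⁻¹ • y = x + c⁻¹ • (y - x) := by module
  rw [hpt, norm_sub_rev x y] at h
  simp only [smul_eq_mul] at h ⊢
  calc c * (φ (x + c⁻¹ • (y - x)) - φ x)
      ≤ c * (c⁻¹ * (φ y - φ x - (1 - c⁻¹) * (m / 2 * ‖y - x‖ ^ 2))) := by
        gcongr; linarith
    _ = _ := by rw [mul_inv_cancel_left₀ hc0.ne']

theorem StrongConvexOn.le_fderiv_sub_apply {m : ℝ} {φ : E → ℝ} {φx φy : E →L[ℝ] ℝ} {x y : E}
    (hφ : StrongConvexOn univ m φ) (hx : HasFDerivAt φ φx x) (hy : HasFDerivAt φ φy y) :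
    m * ‖y - x‖ ^ 2 ≤ (φy - φx) (y - x) := by
  have h₁ := hφ.add_fderiv_le_s10 hx y
  have h₂ := hφ.add_fderiv_le_s10 hy x
  rw [norm_sub_rev x y, ← neg_sub y x, map_neg] at h₂
  rw [sub_apply]
  linarith

end Convexity

section ImplicitFunction

theorem norm_implicit_sub_le {X Y : Type*} [NormedAddCommGroup X] [NormedAddCommGroup Y]
    [NormedSpace ℝ Y] {m L : ℝ} {F : X × Y → Y →L[ℝ] ℝ} {η : X → Y} (hm : 0 < m)
    (hmono : ∀ x y y', m * ‖y' - y‖ ^ 2 ≤ (F (x, y') - F (x, y)) (y' - y))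
    (hL : ∀ p q, ‖F p - F q‖ ≤ L * ‖p - q‖) (hη : ∀ x, F (x, η x) = 0) (x x' : X) :
    ‖η x' - η x‖ ≤ L / m * ‖x' - x‖ := by
  have h₁ := hmono x' (η x) (η x')
  have h₂ : (F (x', η x') - F (x', η x)) (η x' - η x) ≤
      L * ‖x' - x‖ * ‖η x' - η x‖ := by
    rw [hη x', ← hη x]
    refine (Real.le_norm_self _).trans ((le_opNorm _ _).trans ?_)
    gcongr
    refine (hL _ _).trans_eq ?_
    simp [Prod.norm_def, norm_sub_rev]
  rcases (norm_nonneg (η x' - η x)).eq_or_lt with h0 | hpos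
  · rw [← h0, div_mul_eq_mul_div]
    refine div_nonneg ?_ hm.le
    have := (norm_nonneg _).trans (hL (x', η x) (x, η x))
    simpa [Prod.norm_def] using this
  · rw [div_mul_eq_mul_div, le_div_iff₀ hm]
    refine le_of_mul_le_mul_right ?_ hpos
    calc ‖η x' - η x‖ * m * ‖η x' - η x‖ = m * ‖η x' - η x‖ ^ 2 := by ring
      _ ≤ _ := h₁.trans h₂

variable {X Y : Type*} [NormedAddCommGroup X] [NormedSpace ℝ X]
  [NormedAddCommGroup Y] {m L K : ℝ}

section NormedSpace

variable [NormedSpace ℝ Y] {F : X × Y → Y →L[ℝ] ℝ} {η : X → Y}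

theorem le_partial_fderiv_apply
    (hmono : ∀ x y y', m * ‖y' - y‖ ^ 2 ≤ (F (x, y') - F (x, y)) (y' - y))
    {p : X × Y} {F' : X × Y →L[ℝ] Y →L[ℝ] ℝ} (hF : HasFDerivAt F F' p) (v : Y) :
    m * ‖v‖ ^ 2 ≤ F' (0, v) v := by
  have hlim := ((ContinuousLinearMap.apply ℝ ℝ v).continuous.tendsto _).comp
    (hF.lim_real ((0, v) : X × Y))
  refine ge_of_tendsto hlim ?_
  filter_upwards [eventually_gt_atTop (0 : ℝ)] with c hc
  have h := hmono p.1 p.2 (p.2 + c⁻¹ • v)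
  have hp : (p.1, p.2 + c⁻¹ • v) = p + c⁻¹ • ((0, v) : X × Y) := by ext <;> simp
  rw [hp, add_sub_cancel_left, map_smul, norm_smul, Real.norm_of_nonneg (inv_nonneg.2 hc.le)] at h
  simp only [Function.comp_apply, apply_apply, smul_apply, smul_eq_mul] at h ⊢
  have h' := mul_le_mul_of_nonneg_left h (sq_nonneg c)
  calc m * ‖v‖ ^ 2 = c ^ 2 * (m * (c⁻¹ * ‖v‖) ^ 2) := by field_simp
    _ ≤ c ^ 2 * (c⁻¹ * (F (p + c⁻¹ • (0, v)) - F p) v) := h'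
    _ = _ := by field_simp

theorem norm_le_of_coercive (hm : 0 < m) {A : Y →L[ℝ] Y →L[ℝ] ℝ}
    (hA : ∀ v, m * ‖v‖ ^ 2 ≤ A v v) (v : Y) : ‖v‖ ≤ m⁻¹ * ‖A v‖ := by
  rw [inv_mul_eq_div, le_div_iff₀ hm]
  rcases (norm_nonneg v).eq_or_lt with h0 | hpos
  · simp [← h0]
  · refine le_of_mul_le_mul_right ?_ hpos
    calc ‖v‖ * m * ‖v‖ = m * ‖v‖ ^ 2 := by ring
      _ ≤ A v v := hA v
      _ ≤ ‖A v‖ * ‖v‖ := (Real.le_norm_self _).trans (le_opNorm _ _)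

theorem hasFDerivAt_implicit (hm : 0 < m)
    (hlip : ∀ x x', ‖η x' - η x‖ ≤ L * ‖x' - x‖) (hη : ∀ x, F (x, η x) = 0) {x : X}
    {F' : X × Y →L[ℝ] Y →L[ℝ] ℝ} (hF : HasFDerivAt F F' (x, η x))
    (hcoer : ∀ v, m * ‖v‖ ^ 2 ≤ F' (0, v) v)
    {D : X →L[ℝ] Y} (hD : ∀ u, F' (u, D u) = 0) : HasFDerivAt η D x := by
  have hO : (fun x' => η x' - η x) =O[𝓝 x] fun x' => x' - x :=
    IsBigO.of_bound L (Eventually.of_forall (hlip x))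
  have hcont : Tendsto η (𝓝 x) (𝓝 (η x)) := by
    rw [tendsto_iff_norm_sub_tendsto_zero, ← tendsto_zero_iff_norm_tendsto_zero]
    refine hO.trans_tendsto ?_
    exact tendsto_sub_nhds_zero_iff.2 tendsto_id
  have hpair : Tendsto (fun x' => (x', η x')) (𝓝 x) (𝓝 (x, η x)) := tendsto_id.prodMk_nhds hcont
  have hlittle := (hF.isLittleO.comp_tendsto hpair).trans_isBigO
    ((isBigO_refl (fun x' => x' - x) (𝓝 x)).prod_left hO)
  refine .of_isLittleO (IsBigO.trans_isLittleO (IsBigO.of_bound m⁻¹ ?_) hlittle)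
  refine Eventually.of_forall fun x' => ?_
  have hsplit : ((x', η x') - (x, η x) : X × Y) =
      (x' - x, D (x' - x)) + (0, η x' - η x - D (x' - x)) := by ext <;> simp
  have h := norm_le_of_coercive hm (A := F'.comp (inr ℝ X Y)) hcoer (η x' - η x - D (x' - x))
  simpa only [Function.comp_apply, hη, hsplit, map_add, hD, zero_add, sub_zero, zero_sub, norm_neg,
    comp_apply, inr_apply] using h

theorem norm_implicit_fderiv_sub_le (hm : 0 < m) {F₁ F₂ : X × Y →L[ℝ] Y →L[ℝ] ℝ}
    (hcoer : ∀ v, m * ‖v‖ ^ 2 ≤ F₁ (0, v) v) {D₁ D₂ : X →L[ℝ] Y}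
    (hD₁ : ∀ u, F₁ (u, D₁ u) = 0) (hD₂ : ∀ u, F₂ (u, D₂ u) = 0)
    (hK : 1 ≤ K) (hnorm : ‖D₂‖ ≤ K) :
    ‖D₁ - D₂‖ ≤ m⁻¹ * ‖F₁ - F₂‖ * K := by
  refine opNorm_le_bound _ (by positivity) fun u => ?_
  have hA : F₁ (0, (D₁ - D₂) u) = -(F₁ - F₂) (u, D₂ u) := by
    have hsplit : ((0, (D₁ - D₂) u) : X × Y) = (u, D₁ u) - (u, D₂ u) := by ext <;> simp
    rw [hsplit, map_sub, hD₁, sub_apply, hD₂]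
    simp
  have h := norm_le_of_coercive hm (A := F₁.comp (inr ℝ X Y)) hcoer ((D₁ - D₂) u)
  rw [comp_apply, inr_apply, hA, norm_neg] at h
  have hpair : ‖(u, D₂ u)‖ ≤ K * ‖u‖ :=
    norm_prod_le_iff.2 ⟨le_mul_of_one_le_left (norm_nonneg u) hK, le_of_opNorm_le _ hnorm u⟩
  calc ‖(D₁ - D₂) u‖ ≤ m⁻¹ * (‖F₁ - F₂‖ * (K * ‖u‖)) := h.trans (by
        gcongr; exact (le_opNorm _ _).trans (by gcongr))
    _ = _ := by ring

end NormedSpace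

theorem exists_implicit_fderiv [InnerProductSpace ℝ Y] [CompleteSpace Y] (hm : 0 < m)
    {F' : X × Y →L[ℝ] Y →L[ℝ] ℝ} (hcoer : ∀ v, m * ‖v‖ ^ 2 ≤ F' (0, v) v) :
    ∃ D : X →L[ℝ] Y, ∀ u, F' (u, D u) = 0 := by
  have hA : IsCoercive (F'.comp (inr ℝ X Y)) :=
    ⟨m, hm, fun v => by simpa [mul_assoc, sq] using hcoer v⟩
  let S := hA.continuousLinearEquivOfBilin
  let J : (Y →L[ℝ] ℝ) →L[ℝ] Y := LinearMap.mkContinuous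
    { toFun := (InnerProductSpace.toDual ℝ Y).symm
      map_add' := map_add _
      map_smul' := by simp } 1 (by simp)
  refine ⟨-((S.symm : Y →L[ℝ] Y).comp (J.comp (F'.comp (inl ℝ X Y)))), fun u => ?_⟩
  set w := (S.symm : Y →L[ℝ] Y).comp (J.comp (F'.comp (inl ℝ X Y))) u with hw
  have hAw : F' (0, w) = F' (u, 0) := by
    ext v
    have h := hA.continuousLinearEquivOfBilin_apply w v
    have hS : S w = J (F' (u, 0)) := by simp [hw]
    rw [show hA.continuousLinearEquivOfBilin w = J (F' (u, 0)) from hS] at h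
    simpa [J] using h.symm
  have hsplit : ((u, (-((S.symm : Y →L[ℝ] Y).comp (J.comp (F'.comp (inl ℝ X Y))))) u) : X × Y) =
      (u, 0) - (0, w) := by ext <;> simp [hw]
  rw [hsplit, map_sub, hAw, sub_self]

theorem differentiable_implicit_and_norm_fderiv_sub_le [InnerProductSpace ℝ Y] [CompleteSpace Y]
    {M : ℝ} {F : X × Y → Y →L[ℝ] ℝ} {η : X → Y} (hm : 0 < m) (hdiff : Differentiable ℝ F)
    (hmono : ∀ x y y', m * ‖y' - y‖ ^ 2 ≤ (F (x, y') - F (x, y)) (y' - y))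
    (hL : ∀ p q, ‖F p - F q‖ ≤ L * ‖p - q‖)
    (hM : 0 ≤ M) (hM' : ∀ p q, ‖fderiv ℝ F p - fderiv ℝ F q‖ ≤ M * ‖p - q‖)
    (hη : ∀ x, F (x, η x) = 0) (hK : 1 ≤ K) (hLK : L / m ≤ K) :
    Differentiable ℝ η ∧
      ∀ x₁ x₂, ‖fderiv ℝ η x₁ - fderiv ℝ η x₂‖ ≤ m⁻¹ * M * K ^ 2 * ‖x₁ - x₂‖ := by
  have hlip : ∀ x x', ‖η x' - η x‖ ≤ K * ‖x' - x‖ := fun x x' =>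
    (norm_implicit_sub_le hm hmono hL hη x x').trans (by gcongr)
  have hcoer : ∀ p v, m * ‖v‖ ^ 2 ≤ fderiv ℝ F p (0, v) v := fun p v =>
    le_partial_fderiv_apply hmono (hdiff p).hasFDerivAt v
  choose D hD using fun x => exists_implicit_fderiv hm (hcoer (x, η x))
  have hder : ∀ x, HasFDerivAt η (D x) x := fun x =>
    hasFDerivAt_implicit hm hlip hη (hdiff _).hasFDerivAt (hcoer _) (hD x)
  refine ⟨fun x => (hder x).differentiableAt, fun x₁ x₂ => ?_⟩
  rw [(hder x₁).fderiv, (hder x₂).fderiv]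
  have hnorm : ‖D x₂‖ ≤ K :=
    (hder x₂).le_of_lip' (by linarith) (Eventually.of_forall fun x => hlip x₂ x)
  have hpair : ‖((x₁, η x₁) - (x₂, η x₂) : X × Y)‖ ≤ K * ‖x₁ - x₂‖ :=
    norm_prod_le_iff.2 ⟨le_mul_of_one_le_left (norm_nonneg _) hK, hlip x₂ x₁⟩
  calc ‖D x₁ - D x₂‖
      ≤ m⁻¹ * ‖fderiv ℝ F (x₁, η x₁) - fderiv ℝ F (x₂, η x₂)‖ * K :=
        norm_implicit_fderiv_sub_le hm (hcoer _) (hD x₁) (hD x₂) hK hnorm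
    _ ≤ m⁻¹ * (M * (K * ‖x₁ - x₂‖)) * K := by
        gcongr
        exact (hM' _ _).trans (by gcongr)
    _ = _ := by ring

end ImplicitFunction

section PartialDerivative

variable (X Y : Type*) [NormedAddCommGroup X] [NormedSpace ℝ X]
  [NormedAddCommGroup Y] [NormedSpace ℝ Y]

/-- Restriction of a functional on `X × Y` to the second factor. -/
def restrictSnd : (X × Y →L[ℝ] ℝ) →L[ℝ] Y →L[ℝ] ℝ :=
  (compL ℝ Y (X × Y) ℝ).flip (inr ℝ X Y)

variable {X Y}

@[simp]
theorem restrictSnd_apply (φ : X × Y →L[ℝ] ℝ) (v : Y) : restrictSnd X Y φ v = φ (0, v) := rfl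

theorem norm_restrictSnd_le : ‖restrictSnd X Y‖ ≤ 1 := by
  refine opNorm_le_bound _ zero_le_one fun φ => ?_
  rw [one_mul]
  refine opNorm_le_bound _ (norm_nonneg φ) fun v => ?_
  rw [restrictSnd_apply]
  refine (le_opNorm _ _).trans_eq ?_
  simp [Prod.norm_def]

theorem HasFDerivAt.restrictSnd {h : X × Y → ℝ} {h' : X × Y →L[ℝ] ℝ} {x : X} {y : Y}
    (hh : HasFDerivAt h h' (x, y)) :
    HasFDerivAt (fun y => h (x, y)) (restrictSnd X Y h') y :=
  hh.comp y (hasFDerivAt_prodMk_right x y)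

end PartialDerivative

theorem nonneg_of_norm_sub_le {X Z : Type*} [NormedAddCommGroup X] [SeminormedAddCommGroup Z]
    [Nontrivial X] {C : ℝ} {G : X → Z} (hG : ∀ p q, ‖G p - G q‖ ≤ C * ‖p - q‖) : 0 ≤ C := by
  obtain ⟨p, q, hpq⟩ := exists_pair_ne X
  exact nonneg_of_mul_nonneg_left ((norm_nonneg _).trans (hG p q))
    (norm_pos_iff.2 (sub_ne_zero.2 hpq))

theorem norm_add_smul_sub_add_smul_le {V : Type*} [SeminormedAddCommGroup V] [NormedSpace ℝ V]
    {c α β : ℝ} {a a' b b' : V} (hc : 0 ≤ c) (ha : ‖a - a'‖ ≤ α) (hb : ‖b - b'‖ ≤ β) :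
    ‖(a + c • b) - (a' + c • b')‖ ≤ α + c * β := by
  rw [add_sub_add_comm, ← smul_sub]
  refine norm_add_le_of_le ha ?_
  rw [norm_smul, Real.norm_of_nonneg hc]
  gcongr

set_option maxSynthPendingDepth 3 in
theorem differentiable_penalty_minimizer_and_norm_fderiv_sub_le {X Y : Type*}
    [NormedAddCommGroup X] [NormedSpace ℝ X] [NormedAddCommGroup Y] [InnerProductSpace ℝ Y]
    [CompleteSpace Y] [Nontrivial Y] {f g : X × Y → ℝ} {lf1 lf2 lg1 lg2 μg lam : ℝ}
    (hμg : 0 < μg) (hlf2 : 0 ≤ lf2) (hlg2 : 0 ≤ lg2) (hlam0 : 0 < lam)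
    (hlam : 2 * lf1 / μg < lam)
    (hf : ContDiff ℝ 2 f)
    (hf1 : ∀ p q, ‖fderiv ℝ f p - fderiv ℝ f q‖ ≤ lf1 * ‖p - q‖)
    (hf2 : ∀ p q, ‖fderiv ℝ (fderiv ℝ f) p - fderiv ℝ (fderiv ℝ f) q‖ ≤ lf2 * ‖p - q‖)
    (hg : ContDiff ℝ 2 g)
    (hg1 : ∀ p q, ‖fderiv ℝ g p - fderiv ℝ g q‖ ≤ lg1 * ‖p - q‖)
    (hg2 : ∀ p q, ‖fderiv ℝ (fderiv ℝ g) p - fderiv ℝ (fderiv ℝ g) q‖ ≤ lg2 * ‖p - q‖)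
    (hsc : ∀ x, StrongConvexOn univ μg (fun y => g (x, y))) {η : X → Y}
    (hmin : ∀ x y, f (x, η x) + lam * g (x, η x) ≤ f (x, y) + lam * g (x, y)) :
    Differentiable ℝ η ∧ ∀ x₁ x₂, ‖fderiv ℝ η x₁ - fderiv ℝ η x₂‖ ≤
      32 * (lg2 + lf2 / lam) * lg1 ^ 2 / μg ^ 3 * ‖x₁ - x₂‖ := by
  have hfd : Differentiable ℝ f := hf.differentiable (by norm_num)
  have hgd : Differentiable ℝ g := hg.differentiable (by norm_num)
  have hfd2 : Differentiable ℝ (fderiv ℝ f) :=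
    (hf.fderiv_right (m := 1) (by norm_num)).differentiable (by norm_num)
  have hgd2 : Differentiable ℝ (fderiv ℝ g) :=
    (hg.fderiv_right (m := 1) (by norm_num)).differentiable (by norm_num)
  set R := restrictSnd X Y
  let F := fun p => R (fderiv ℝ f p + lam • fderiv ℝ g p)
  have hFder : ∀ p, HasFDerivAt F
      (R.comp (fderiv ℝ (fderiv ℝ f) p + lam • fderiv ℝ (fderiv ℝ g) p)) p := fun p =>
    R.hasFDerivAt.comp p ((hfd2 p).hasFDerivAt.add ((hgd2 p).hasFDerivAt.const_smul lam))
  have hgmono : ∀ x y y', μg * ‖y' - y‖ ^ 2 ≤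
      (fderiv ℝ g (x, y') - fderiv ℝ g (x, y)) (0, y' - y) := fun x y y' =>
    (hsc x).le_fderiv_sub_apply (hgd (x, y)).hasFDerivAt.restrictSnd
      (hgd (x, y')).hasFDerivAt.restrictSnd
  have hpair : ∀ (x : X) (y y' : Y),
      ‖(x, y') - (x, y)‖ = ‖y' - y‖ := fun x y y' => by simp [Prod.norm_def]
  have hinr : ∀ v : Y,
      ‖((0, v) : X × Y)‖ = ‖v‖ := fun v => by
    simp [Prod.norm_def]
  have hμlg : μg ≤ lg1 := by
    obtain ⟨v, hv⟩ := exists_ne (0 : Y)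
    have h := hgmono 0 0 v
    have h' := (le_abs_self _).trans (le_of_opNorm_le _
      (hg1 ((0 : X), v) (0, 0)) (0, v - 0))
    rw [hpair, hinr] at h'
    have hpos : 0 < ‖v - 0‖ := by simpa using hv
    refine le_of_mul_le_mul_right ?_ (pow_pos hpos 2)
    linarith
  have hlf1le : lf1 ≤ lam * μg / 2 := by
    rw [div_lt_iff₀ hμg] at hlam
    linarith
  have hlamμ : 0 < lam * μg := mul_pos hlam0 hμg
  have hmono : ∀ x y y', lam * μg / 2 * ‖y' - y‖ ^ 2 ≤ (F (x, y') - F (x, y)) (y' - y) := by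
    intro x y y'
    have h₁ := mul_le_mul_of_nonneg_left (hgmono x y y') hlam0.le
    have h₂ := (neg_le_abs _).trans (le_of_opNorm_le _ (hf1 (x, y') (x, y)) (0, y' - y))
    rw [hpair, hinr] at h₂
    have h₃ := mul_le_mul_of_nonneg_right hlf1le (sq_nonneg ‖y' - y‖)
    simp only [F, R, sub_apply, add_apply, smul_apply, smul_eq_mul, restrictSnd_apply] at h₁ h₂ ⊢
    linarith
  have hL : ∀ p q, ‖F p - F q‖ ≤ (lf1 + lam * lg1) * ‖p - q‖ := by
    intro p q
    rw [← map_sub, add_mul, mul_assoc]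
    refine (le_of_opNorm_le _ norm_restrictSnd_le _).trans ?_
    rw [one_mul]
    exact norm_add_smul_sub_add_smul_le hlam0.le (hf1 p q) (hg1 p q)
  have hM : ∀ p q, ‖fderiv ℝ F p - fderiv ℝ F q‖ ≤ (lf2 + lam * lg2) * ‖p - q‖ := by
    intro p q
    rw [(hFder p).fderiv, (hFder q).fderiv, ← comp_sub, add_mul, mul_assoc]
    refine (opNorm_comp_le _ _).trans ((mul_le_of_le_one_left (norm_nonneg _)
      norm_restrictSnd_le).trans ?_)
    exact norm_add_smul_sub_add_smul_le hlam0.le (hf2 p q) (hg2 p q)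
  have hη : ∀ x, F (x, η x) = 0 := by
    intro x
    have hloc : IsLocalMin (fun y => f (x, y) + lam * g (x, y)) (η x) :=
      .of_forall (hmin x)
    refine hloc.hasFDerivAt_eq_zero ?_
    exact ((hfd (x, η x)).hasFDerivAt.add
      ((hgd (x, η x)).hasFDerivAt.const_mul lam)).restrictSnd
  have hK : 1 ≤ 3 * lg1 / μg := by
    rw [le_div_iff₀ hμg]
    linarith
  have hLK : (lf1 + lam * lg1) / (lam * μg / 2) ≤ 3 * lg1 / μg := by
    rw [div_le_div_iff₀ (by positivity) hμg]
    have := mul_le_mul_of_nonneg_left hμlg hlam0.le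
    nlinarith
  obtain ⟨hd, hbound⟩ := differentiable_implicit_and_norm_fderiv_sub_le (half_pos hlamμ)
    (fun p => (hFder p).differentiableAt) hmono hL (by positivity) hM hη hK hLK
  refine ⟨hd, fun x₁ x₂ => (hbound x₁ x₂).trans ?_⟩
  gcongr
  calc (lam * μg / 2)⁻¹ * (lf2 + lam * lg2) * (3 * lg1 / μg) ^ 2
      = 18 * ((lg2 + lf2 / lam) * lg1 ^ 2 / μg ^ 3) := by
        field_simp
        ring
    _ ≤ 32 * ((lg2 + lf2 / lam) * lg1 ^ 2 / μg ^ 3) := by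
        gcongr
        norm_num
    _ = _ := by ring

theorem lagrangian_minimizer_smoothness
    (dx dy : ℕ)
    (f g : EuclideanSpace ℝ (Fin dx) × EuclideanSpace ℝ (Fin dy) → ℝ)
    (lf1 lf2 lg1 lg2 μg : ℝ)
    (hμg : 0 < μg)
    (hf : ContDiff ℝ 2 f)
    (hf1 : ∀ p q, ‖fderiv ℝ f p - fderiv ℝ f q‖ ≤ lf1 * ‖p - q‖)
    (hf2 : ∀ p q, ‖fderiv ℝ (fderiv ℝ f) p - fderiv ℝ (fderiv ℝ f) q‖ ≤ lf2 * ‖p - q‖)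
    (hg : ContDiff ℝ 2 g)
    (hg1 : ∀ p q, ‖fderiv ℝ g p - fderiv ℝ g q‖ ≤ lg1 * ‖p - q‖)
    (hg2 : ∀ p q, ‖fderiv ℝ (fderiv ℝ g) p - fderiv ℝ (fderiv ℝ g) q‖ ≤ lg2 * ‖p - q‖)
    (hsc : ∀ x, StrongConvexOn univ μg (fun y => g (x, y)))
    (ystar : EuclideanSpace ℝ (Fin dx) → EuclideanSpace ℝ (Fin dy))
    (hystar : ∀ x y, g (x, ystar x) ≤ g (x, y))
    (ystarlam : ℝ → EuclideanSpace ℝ (Fin dx) → EuclideanSpace ℝ (Fin dy))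
    (hystarlam : ∀ lam x, 2 * lf1 / μg ≤ lam → ∀ y,
      f (x, ystarlam lam x) + lam * (g (x, ystarlam lam x) - g (x, ystar x)) ≤
      f (x, y) + lam * (g (x, y) - g (x, ystar x))) :
    ∀ lam : ℝ, 2 * lf1 / μg < lam →
      Differentiable ℝ (ystarlam lam) ∧
      ∀ x₁ x₂ : EuclideanSpace ℝ (Fin dx),
        ‖fderiv ℝ (ystarlam lam) x₁ - fderiv ℝ (ystarlam lam) x₂‖ ≤
          32 * (lg2 + lf2 / lam) * lg1 ^ 2 / μg ^ 3 * ‖x₁ - x₂‖ := by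
  intro lam hlam
  rcases subsingleton_or_nontrivial (EuclideanSpace ℝ (Fin dx)) with hX | hX
  · refine ⟨fun x => (hasFDerivAt_of_subsingleton _ x).differentiableAt, fun x₁ x₂ => ?_⟩
    simp [Subsingleton.elim x₁ x₂]
  have hlf1 : 0 ≤ lf1 := nonneg_of_norm_sub_le hf1
  have hlf2 : 0 ≤ lf2 := nonneg_of_norm_sub_le (G := fderiv ℝ (fderiv ℝ f)) hf2
  have hlg2 : 0 ≤ lg2 := nonneg_of_norm_sub_le (G := fderiv ℝ (fderiv ℝ g)) hg2
  have hlam0 : 0 < lam := lt_of_le_of_lt (by positivity) hlam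
  rcases subsingleton_or_nontrivial (EuclideanSpace ℝ (Fin dy)) with hY | hY
  · refine ⟨fun x => ((hasFDerivAt_const (0 : EuclideanSpace ℝ (Fin dy)) x).congr_of_eventuallyEq
      (.of_forall fun _ => Subsingleton.elim _ _)).differentiableAt, fun x₁ x₂ => ?_⟩
    rw [show fderiv ℝ (ystarlam lam) x₁ = fderiv ℝ (ystarlam lam) x₂ from
      ContinuousLinearMap.ext fun _ => Subsingleton.elim _ _, sub_self, norm_zero]
    positivity
  exact differentiable_penalty_minimizer_and_norm_fderiv_sub_le hμg hlf2 hlg2 hlam0 hlam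
    hf hf1 hf2 hg hg1 hg2 hsc fun x y => by linarith [hystarlam lam x hlam.le y]
end
end

section
/- One stochastic gradient step on a strongly convex function contracts in expectation: if γ l ≤ 1/4, then E[‖z − γ h − y*‖²] ≤ (1 − 3 μ γ/4) ‖z − y*‖² + γ² σ². -/
open Set MeasureTheory

noncomputable section

open Filter Topology

section InnerProductSpace

variable {E : Type*} [NormedAddCommGroup E] [InnerProductSpace ℝ E]

/-- First-order lower bound for a strongly convex function. -/
theorem StrongConvexOn.add_inner_add_le [CompleteSpace E] {s : Set E} {m : ℝ} {f : E → ℝ}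
    (hf : StrongConvexOn s m f) {u v f' : E} (hu : u ∈ s) (hv : v ∈ s)
    (hf' : HasGradientAt f f' u) :
    f u + inner ℝ f' (v - u) + m / 2 * ‖v - u‖ ^ 2 ≤ f v := by
  have hderiv : HasDerivAt (fun t : ℝ => f (u + t • (v - u))) (inner ℝ f' (v - u)) 0 := by
    have hline : HasDerivAt (fun t : ℝ => u + t • (v - u)) (v - u) 0 := by
      simpa using ((hasDerivAt_id (0 : ℝ)).smul_const (v - u)).const_add u
    have hfd : HasFDerivAt f (InnerProductSpace.toDual ℝ E f') (u + (0 : ℝ) • (v - u)) := by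
      simpa using hf'.hasFDerivAt
    simpa [Function.comp_def] using hfd.comp_hasDerivAt (0 : ℝ) hline
  have hslope := hderiv.tendsto_slope_zero_right
  have hbound : Tendsto (fun t : ℝ => f v - f u - (1 - t) * (m / 2 * ‖v - u‖ ^ 2)) (𝓝[>] 0)
      (𝓝 (f v - f u - (1 - 0) * (m / 2 * ‖v - u‖ ^ 2))) :=
    ((by fun_prop : Continuous fun t : ℝ =>
      f v - f u - (1 - t) * (m / 2 * ‖v - u‖ ^ 2)).tendsto 0).mono_left nhdsWithin_le_nhds
  have hle := le_of_tendsto_of_tendsto hslope hbound <| by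
    filter_upwards [Ioo_mem_nhdsGT (zero_lt_one (α := ℝ))] with t ht
    have hconv := hf.2 hu hv (sub_nonneg.2 ht.2.le) ht.1.le (sub_add_cancel 1 t)
    have hpoint : (1 - t) • u + t • v = u + t • (v - u) := by module
    rw [hpoint, norm_sub_rev u v] at hconv
    simp only [smul_eq_mul] at hconv
    simp only [zero_add, zero_smul, add_zero, smul_eq_mul]
    rw [inv_mul_le_iff₀ ht.1]
    linarith
  linarith

/-- For a convex function with `l`-Lipschitz gradient and a step size `γ` with `γ * l ≤ 1 / 4`,
the squared gradient norm is controlled by the optimality gap. -/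
theorem mul_norm_gradient_sq_le_sub [CompleteSpace E] {f : E → ℝ} {l γ : ℝ} (hγ : 0 ≤ γ)
    (hf : ConvexOn ℝ univ f) (hdiff : Differentiable ℝ f)
    (hlip : ∀ a b, ‖gradient f a - gradient f b‖ ≤ l * ‖a - b‖)
    {y : E} (hy : ∀ v, f y ≤ f v) (hstep : γ * l ≤ 1 / 4) (z : E) :
    γ * ‖gradient f z‖ ^ 2 ≤ f z - f y := by
  set g := gradient f z with hg
  set v := z - (2 * γ) • g with hv
  have hzv : z - v = (2 * γ) • g := by simp [hv]
  have hfirst := (strongConvexOn_zero.2 hf).add_inner_add_le (mem_univ v) (mem_univ z)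
    (hdiff v).hasGradientAt
  have hnorm : ‖g - gradient f v‖ ≤ l * (2 * γ * ‖g‖) := by
    simpa [hzv, norm_smul, abs_of_nonneg hγ] using hlip z v
  have hsplit : inner ℝ (gradient f v) g = ‖g‖ ^ 2 - inner ℝ (g - gradient f v) g := by
    rw [inner_sub_left, real_inner_self_eq_norm_sq]
    ring
  have hcs : inner ℝ (g - gradient f v) g ≤ 1 / 2 * ‖g‖ ^ 2 :=
    calc inner ℝ (g - gradient f v) g ≤ ‖g - gradient f v‖ * ‖g‖ := real_inner_le_norm _ _
      _ ≤ l * (2 * γ * ‖g‖) * ‖g‖ := by gcongr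
      _ = 2 * (γ * l) * ‖g‖ ^ 2 := by ring
      _ ≤ 2 * (1 / 4) * ‖g‖ ^ 2 := by gcongr
      _ = 1 / 2 * ‖g‖ ^ 2 := by ring
  rw [hzv, real_inner_smul_right, hsplit] at hfirst
  have hmul := mul_le_mul_of_nonneg_left hcs hγ
  linarith [hy v]

/-- An exact gradient step on a strongly convex function contracts towards the minimizer. -/
theorem norm_sub_smul_gradient_sq_le [CompleteSpace E] {f : E → ℝ} {m l γ : ℝ} (hm : 0 ≤ m)
    (hγ : 0 ≤ γ) (hf : StrongConvexOn univ m f) (hdiff : Differentiable ℝ f)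
    (hlip : ∀ a b, ‖gradient f a - gradient f b‖ ≤ l * ‖a - b‖)
    {y : E} (hy : ∀ v, f y ≤ f v) (hstep : γ * l ≤ 1 / 4) (z : E) :
    ‖z - y - γ • gradient f z‖ ^ 2 ≤ (1 - m * γ) * ‖z - y‖ ^ 2 := by
  have hgap := mul_norm_gradient_sq_le_sub hγ (strongConvexOn_zero.1 (hf.mono hm)) hdiff hlip hy
    hstep z
  have hfirst := hf.add_inner_add_le (mem_univ z) (mem_univ y) (hdiff z).hasGradientAt
  rw [← neg_sub z y, inner_neg_right, norm_neg, real_inner_comm] at hfirst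
  rw [norm_sub_sq_real, real_inner_smul_right, norm_smul, mul_pow, Real.norm_eq_abs, sq_abs]
  have hgap_mul := mul_le_mul_of_nonneg_left hgap hγ
  have hfirst_mul := mul_le_mul_of_nonneg_left hfirst hγ
  have hnonneg := mul_nonneg hγ (sub_nonneg.2 (hy z))
  linarith

/-- Bias-variance decomposition around a point for a centered random vector. -/
theorem integral_norm_sub_smul_sq [CompleteSpace E] {Ω : Type*} [MeasurableSpace Ω]
    {P : Measure Ω} [IsProbabilityMeasure P] {X : Ω → E} (hX : Integrable X P)
    (hX2 : Integrable (fun ω => ‖X ω‖ ^ 2) P) (hmean : ∫ ω, X ω ∂P = 0) (a : E) (c : ℝ) :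
    ∫ ω, ‖a - c • X ω‖ ^ 2 ∂P = ‖a‖ ^ 2 + c ^ 2 * ∫ ω, ‖X ω‖ ^ 2 ∂P := by
  have hexpand : ∀ ω, ‖a - c • X ω‖ ^ 2 =
      ‖a‖ ^ 2 - 2 * c * inner ℝ a (X ω) + c ^ 2 * ‖X ω‖ ^ 2 := fun ω => by
    rw [norm_sub_sq_real, real_inner_smul_right, norm_smul, mul_pow, Real.norm_eq_abs, sq_abs]
    ring
  have hinner : Integrable (fun ω => 2 * c * inner ℝ a (X ω)) P :=
    (hX.const_inner a).const_mul _
  have hsub : Integrable (fun ω => ‖a‖ ^ 2 - 2 * c * inner ℝ a (X ω)) P :=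
    (integrable_const _).sub hinner
  simp_rw [hexpand]
  rw [integral_add hsub (hX2.const_mul _),
    integral_sub (integrable_const _) hinner, integral_const_mul, integral_const_mul,
    integral_inner hX, hmean]
  simp

end InnerProductSpace

theorem sgd_one_step_contraction
    (d : ℕ)
    (G : EuclideanSpace ℝ (Fin d) → ℝ)
    (μ l γ σ : ℝ)
    (hμ : 0 < μ) (hγ : 0 < γ)
    (hG : ContDiff ℝ 1 G)
    (hsc : StrongConvexOn univ μ G)
    (hlip : ∀ a b, ‖gradient G a - gradient G b‖ ≤ l * ‖a - b‖)
    (ystar : EuclideanSpace ℝ (Fin d))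
    (hystar : ∀ v, G ystar ≤ G v)
    (z : EuclideanSpace ℝ (Fin d))
    (Ω : Type*) [MeasureSpace Ω] [IsProbabilityMeasure (volume : Measure Ω)]
    (h : Ω → EuclideanSpace ℝ (Fin d))
    (hint : Integrable h)
    (hmean : (∫ ω, h ω) = gradient G z)
    (hvarint : Integrable (fun ω => ‖h ω - gradient G z‖ ^ 2))
    (hvar : (∫ ω, ‖h ω - gradient G z‖ ^ 2) ≤ σ ^ 2)
    (hstep : γ * l ≤ 1 / 4) :
    (∫ ω, ‖z - γ • h ω - ystar‖ ^ 2) ≤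
      (1 - 3 * μ * γ / 4) * ‖z - ystar‖ ^ 2 + γ ^ 2 * σ ^ 2 := by
  have hcentered : Integrable (fun ω => h ω - gradient G z) := hint.sub (integrable_const _)
  have hzero : ∫ ω, (h ω - gradient G z) = 0 := by
    rw [integral_sub hint (integrable_const _), hmean]
    simp
  have hpoint : ∀ ω, z - γ • h ω - ystar =
      (z - ystar - γ • gradient G z) - γ • (h ω - gradient G z) := fun ω => by module
  simp_rw [hpoint]
  rw [integral_norm_sub_smul_sq hcentered hvarint hzero]
  have hdet := norm_sub_smul_gradient_sq_le hμ.le hγ.le hsc (hG.differentiable one_ne_zero) hlip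
    hystar hstep z
  have hnoise := mul_le_mul_of_nonneg_left hvar (sq_nonneg γ)
  have hslack : 0 ≤ μ * γ * ‖z - ystar‖ ^ 2 := by positivity
  linarith
end
end

section
/- One stochastic gradient step on the Lagrangian contracts towards the Lagrangian minimizer in expectation: if λ ≥ 2 l_{f,1}/μ_g and α (l_{f,1} + λ l_{g,1}) ≤ 1/4, then E[‖y − α (h_f + λ h_g) − y*_λ(x)‖²] ≤ (1 − 3 μ_g α λ/4) ‖y − y*_λ(x)‖² + α² σ_f² + α² λ² σ_g². -/
open Set MeasureTheory

noncomputable section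

/-- Quadratic bound for the first-order Taylor remainder of a function with Lipschitz derivative. -/
lemma abs_sub_sub_fderiv_le_of_lipschitz_fderiv {E : Type*} [NormedAddCommGroup E]
    [NormedSpace ℝ E] {h : E → ℝ} {l : ℝ} (hd : Differentiable ℝ h)
    (hl : ∀ p q, ‖fderiv ℝ h p - fderiv ℝ h q‖ ≤ l * ‖p - q‖) (y v : E) :
    |h (y + v) - h y - fderiv ℝ h y v| ≤ l / 2 * ‖v‖ ^ 2 := by
  have hderiv (t : ℝ) : HasDerivAt (fun t : ℝ => h (y + t • v) - h y - t * fderiv ℝ h y v)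
      (fderiv ℝ h (y + t • v) v - fderiv ℝ h y v) t := by
    have hline : HasDerivAt (fun t : ℝ => y + t • v) v t := by
      simpa using ((hasDerivAt_id t).smul_const v).const_add y
    have hcomp := (hd (y + t • v)).hasFDerivAt.comp_hasDerivAt t hline
    simpa using! (hcomp.sub_const (h y)).sub ((hasDerivAt_id t).mul_const (fderiv ℝ h y v))
  have hbound (t : ℝ) :
      HasDerivAt (fun t : ℝ => l / 2 * ‖v‖ ^ 2 * t ^ 2) (l * ‖v‖ ^ 2 * t) t := by
    refine ((hasDerivAt_pow 2 t).const_mul (l / 2 * ‖v‖ ^ 2)).congr_deriv ?_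
    norm_num
    ring
  have key := image_norm_le_of_norm_deriv_right_le_deriv_boundary (a := 0) (b := 1)
    (f := fun t : ℝ => h (y + t • v) - h y - t * fderiv ℝ h y v)
    (fun t _ => (hderiv t).continuousAt.continuousWithinAt)
    (fun t _ => (hderiv t).hasDerivWithinAt) (by simp) hbound
    (fun t ht => by
      calc ‖fderiv ℝ h (y + t • v) v - fderiv ℝ h y v‖
          = ‖(fderiv ℝ h (y + t • v) - fderiv ℝ h y) v‖ := by simp
        _ ≤ ‖fderiv ℝ h (y + t • v) - fderiv ℝ h y‖ * ‖v‖ := ContinuousLinearMap.le_opNorm _ _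
        _ ≤ (l * ‖y + t • v - y‖) * ‖v‖ := by gcongr; exact hl _ _
        _ = l * ‖v‖ ^ 2 * t := by
          rw [add_sub_cancel_left, norm_smul, Real.norm_of_nonneg ht.1]; ring)
    (right_mem_Icc.2 zero_le_one)
  simpa using key

/-- A differentiable strongly convex function lies above its quadratic lower models. -/
lemma StrongConvexOn.add_fderiv_add_le {E : Type*} [NormedAddCommGroup E] [NormedSpace ℝ E]
    {h : E → ℝ} {m : ℝ} (hc : StrongConvexOn univ m h) {y : E} (hd : DifferentiableAt ℝ h y)
    (v : E) : h y + fderiv ℝ h y v + m / 2 * ‖v‖ ^ 2 ≤ h (y + v) := by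
  have hline : HasDerivAt (fun t : ℝ => h (y + t • v)) (fderiv ℝ h y v) 0 := by
    have hcurve : HasDerivAt (fun t : ℝ => y + t • v) v 0 := by
      simpa using ((hasDerivAt_id (0 : ℝ)).smul_const v).const_add y
    exact HasFDerivAt.comp_hasDerivAt_of_eq 0 hd.hasFDerivAt hcurve (by simp)
  have hslope := (hasDerivWithinAt_iff_tendsto_slope' self_notMem_Ioi).mp
    (hline.hasDerivWithinAt (s := Ioi 0))
  have hmodel : Filter.Tendsto (fun t : ℝ => h (y + v) - h y - (1 - t) * (m / 2 * ‖v‖ ^ 2))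
      (nhdsWithin 0 (Ioi 0)) (nhds (h (y + v) - h y - (1 - 0) * (m / 2 * ‖v‖ ^ 2))) :=
    ((by fun_prop : Continuous fun t : ℝ =>
      h (y + v) - h y - (1 - t) * (m / 2 * ‖v‖ ^ 2)).tendsto 0).mono_left nhdsWithin_le_nhds
  have hle := le_of_tendsto_of_tendsto hslope hmodel (by
    filter_upwards [Ioo_mem_nhdsGT (zero_lt_one' ℝ)] with t ht
    have hconv := hc.2 (mem_univ (y + v)) (mem_univ y) ht.1.le (sub_nonneg.2 ht.2.le)
      (add_sub_cancel t 1)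
    have hpoint : t • (y + v) + (1 - t) • y = y + t • v := by module
    rw [hpoint, add_sub_cancel_left] at hconv
    simp only [smul_eq_mul] at hconv
    rw [slope_def_field, zero_smul, add_zero, sub_zero, div_le_iff₀ ht.1]
    linarith)
  linarith

/-- A gradient step of length `α ≤ 1 / (4 * L)` on a function lying between quadratic models of
curvatures `m` and `L` contracts towards its minimizer. -/
lemma norm_sq_gradient_step_sub_le {E : Type*} [NormedAddCommGroup E] [InnerProductSpace ℝ E]
    {φ : E → ℝ} {G : E → E} {m L α : ℝ} {z : E} (hm : 0 ≤ m) (hα : 0 < α) (hαL : α * L ≤ 1 / 4)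
    (hlow : ∀ y v, φ y + inner ℝ (G y) v + m / 2 * ‖v‖ ^ 2 ≤ φ (y + v))
    (hup : ∀ y v, φ (y + v) ≤ φ y + inner ℝ (G y) v + L / 2 * ‖v‖ ^ 2)
    (hz : ∀ y, φ z ≤ φ y) (y : E) :
    ‖y - α • G y - z‖ ^ 2 ≤ (1 - 3 / 2 * (α * m)) * ‖y - z‖ ^ 2 := by
  have hdescent (w : E) : φ z ≤ φ w - 3 / 2 * α * ‖G w‖ ^ 2 := by
    have h := (hz _).trans (hup w (-((2 * α) • G w)))
    rw [inner_neg_right, inner_smul_right, real_inner_self_eq_norm_sq, norm_neg, norm_smul,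
      Real.norm_of_nonneg (by positivity)] at h
    nlinarith [mul_le_mul_of_nonneg_right hαL (mul_nonneg hα.le (sq_nonneg ‖G w‖))]
  have hGz : G z = 0 := by
    have h := hdescent z
    have : ‖G z‖ ^ 2 ≤ 0 := by nlinarith [sq_nonneg ‖G z‖]
    simpa using this
  have hgrowth := hlow z (y - z)
  rw [hGz, inner_zero_left, add_sub_cancel] at hgrowth
  have hback := hlow y (-(y - z))
  rw [inner_neg_right, norm_neg, show y + -(y - z) = z by abel] at hback
  have hexpand : ‖y - α • G y - z‖ ^ 2 =
      ‖y - z‖ ^ 2 - 2 * α * inner ℝ (G y) (y - z) + α ^ 2 * ‖G y‖ ^ 2 := by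
    rw [show y - α • G y - z = (y - z) - α • G y by abel, norm_sub_sq_real, inner_smul_right,
      norm_smul, mul_pow, Real.norm_eq_abs, sq_abs, real_inner_comm]
    ring
  rw [hexpand]
  have hgrad : α * (α * ‖G y‖ ^ 2) ≤ α * (2 / 3 * (φ y - φ z)) :=
    mul_le_mul_of_nonneg_left (by linarith [hdescent y]) hα.le
  have hinner : α * (φ y - φ z + m / 2 * ‖y - z‖ ^ 2) ≤ α * inner ℝ (G y) (y - z) :=
    mul_le_mul_of_nonneg_left (by linarith) hα.le
  have hgap : α * (m / 2 * ‖y - z‖ ^ 2) ≤ α * (φ y - φ z) :=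
    mul_le_mul_of_nonneg_left (by linarith) hα.le
  have hnonneg : 0 ≤ α * m * ‖y - z‖ ^ 2 := by positivity
  nlinarith

/-- Bias-variance decomposition for a combination of two independent random vectors. -/
lemma integral_norm_sq_sub_smul_add_smul {E Ω : Type*} [NormedAddCommGroup E]
    [InnerProductSpace ℝ E] [CompleteSpace E] [MeasurableSpace E] [BorelSpace E]
    [MeasurableSpace Ω] {μ : Measure Ω} [IsProbabilityMeasure μ] {X Y : Ω → E}
    (hXY : ProbabilityTheory.IndepFun X Y μ) (hX : Integrable X μ) (hY : Integrable Y μ)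
    {a b : E} (ha : ∫ ω, X ω ∂μ = a) (hb : ∫ ω, Y ω ∂μ = b)
    (hX2 : Integrable (fun ω => ‖X ω - a‖ ^ 2) μ) (hY2 : Integrable (fun ω => ‖Y ω - b‖ ^ 2) μ)
    (w : E) (α c : ℝ) :
    ∫ ω, ‖w - α • (X ω + c • Y ω)‖ ^ 2 ∂μ = ‖w - α • (a + c • b)‖ ^ 2 +
      α ^ 2 * ∫ ω, ‖X ω - a‖ ^ 2 ∂μ + α ^ 2 * c ^ 2 * ∫ ω, ‖Y ω - b‖ ^ 2 ∂μ := by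
  set u := w - α • (a + c • b)
  have hXa : Integrable (fun ω => X ω - a) μ := hX.sub (integrable_const a)
  have hYb : Integrable (fun ω => Y ω - b) μ := hY.sub (integrable_const b)
  have hXa0 : ∫ ω, X ω - a ∂μ = 0 := by
    rw [integral_sub hX (integrable_const a), ha]; simp
  have hYb0 : ∫ ω, Y ω - b ∂μ = 0 := by
    rw [integral_sub hY (integrable_const b), hb]; simp
  have hind : ProbabilityTheory.IndepFun (fun ω => X ω - a) (fun ω => Y ω - b) μ :=
    hXY.comp (φ := fun e => e - a) (ψ := fun e => e - b)
      (continuous_sub_right a).measurable (continuous_sub_right b).measurable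
  have hcross : Integrable (fun ω => inner ℝ (X ω - a) (Y ω - b)) μ :=
    hind.integrable_bilin hXa hYb (innerSL ℝ)
  have hcross0 : ∫ ω, inner ℝ (X ω - a) (Y ω - b) ∂μ = 0 := by
    have h := hind.integral_bilin hXa hYb (innerSL ℝ)
    rwa [hXa0, map_zero, zero_apply] at h
  have huX : ∫ ω, inner ℝ u (X ω - a) ∂μ = 0 := by
    rw [integral_inner hXa, hXa0, inner_zero_right]
  have huY : ∫ ω, inner ℝ u (Y ω - b) ∂μ = 0 := by
    rw [integral_inner hYb, hYb0, inner_zero_right]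
  have hexpand (ω : Ω) : ‖w - α • (X ω + c • Y ω)‖ ^ 2 = ‖u‖ ^ 2 +
      (α ^ 2 * ‖X ω - a‖ ^ 2 + (α ^ 2 * c ^ 2 * ‖Y ω - b‖ ^ 2 +
      (2 * α ^ 2 * c * inner ℝ (X ω - a) (Y ω - b) +
      (-2 * α * inner ℝ u (X ω - a) + -2 * α * c * inner ℝ u (Y ω - b))))) := by
    have hsplit : w - α • (X ω + c • Y ω) = u - α • ((X ω - a) + c • (Y ω - b)) := by
      simp only [u]; module
    rw [hsplit, norm_sub_sq_real, norm_smul, mul_pow, norm_add_sq_real, norm_smul, mul_pow]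
    simp only [inner_smul_right, inner_add_right, Real.norm_eq_abs, sq_abs]
    ring
  simp_rw [hexpand]
  have huXint : Integrable (fun ω => inner ℝ u (X ω - a)) μ := hXa.const_inner u
  have huYint : Integrable (fun ω => inner ℝ u (Y ω - b)) μ := hYb.const_inner u
  rw [integral_add (by fun_prop) (by fun_prop), integral_add (by fun_prop) (by fun_prop),
    integral_add (by fun_prop) (by fun_prop), integral_add (by fun_prop) (by fun_prop),
    integral_add (by fun_prop) (by fun_prop)]
  simp only [integral_const_mul, hcross0, huX, huY, integral_const, probReal_univ, one_smul]
  ring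

/-- Quadratic bound for the Taylor remainder of a partial map in terms of its gradient. -/
lemma abs_sub_sub_inner_gradient_le_of_lipschitz_fderiv {E F : Type*} [NormedAddCommGroup E]
    [NormedSpace ℝ E] [NormedAddCommGroup F] [InnerProductSpace ℝ F] [CompleteSpace F]
    {h : E × F → ℝ} {l : ℝ} (hd : Differentiable ℝ h)
    (hl : ∀ p q, ‖fderiv ℝ h p - fderiv ℝ h q‖ ≤ l * ‖p - q‖) (x : E) (y v : F) :
    |h (x, y + v) - h (x, y) - inner ℝ (gradient (fun y' => h (x, y')) y) v| ≤
      l / 2 * ‖v‖ ^ 2 := by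
  have hpartial : HasFDerivAt (fun y' => h (x, y'))
      ((fderiv ℝ h (x, y)).comp (ContinuousLinearMap.inr ℝ E F)) y :=
    (hd (x, y)).hasFDerivAt.comp y (hasFDerivAt_prodMk_right x y)
  simpa [inner_gradient_left, hpartial.fderiv] using
    abs_sub_sub_fderiv_le_of_lipschitz_fderiv hd hl (x, y) (0, v)

theorem lagrangian_sgd_one_step_contraction
    (dx dy : ℕ)
    (f g : EuclideanSpace ℝ (Fin dx) × EuclideanSpace ℝ (Fin dy) → ℝ)
    (lf1 lg1 μg : ℝ)
    (hμg : 0 < μg)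
    (hf : ContDiff ℝ 1 f)
    (hf1 : ∀ p q, ‖fderiv ℝ f p - fderiv ℝ f q‖ ≤ lf1 * ‖p - q‖)
    (hg : ContDiff ℝ 1 g)
    (hg1 : ∀ p q, ‖fderiv ℝ g p - fderiv ℝ g q‖ ≤ lg1 * ‖p - q‖)
    (hsc : ∀ x, StrongConvexOn univ μg (fun y => g (x, y)))
    (ystar : EuclideanSpace ℝ (Fin dx) → EuclideanSpace ℝ (Fin dy))
    (hystar : ∀ x y, g (x, ystar x) ≤ g (x, y))
    (ystarlam : ℝ → EuclideanSpace ℝ (Fin dx) → EuclideanSpace ℝ (Fin dy))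
    (hystarlam : ∀ lam x, 2 * lf1 / μg ≤ lam → ∀ y,
      f (x, ystarlam lam x) + lam * (g (x, ystarlam lam x) - g (x, ystar x)) ≤
      f (x, y) + lam * (g (x, y) - g (x, ystar x)))
    (x : EuclideanSpace ℝ (Fin dx)) (y : EuclideanSpace ℝ (Fin dy))
    (α lam σf σg : ℝ) (hα : 0 < α)
    (Ω : Type*) [MeasureSpace Ω] [IsProbabilityMeasure (volume : Measure Ω)]
    (hfr hgr : Ω → EuclideanSpace ℝ (Fin dy))
    (hindep : ProbabilityTheory.IndepFun hfr hgr)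
    (hfint : Integrable hfr) (hgint : Integrable hgr)
    (hfmean : (∫ ω, hfr ω) = gradient (fun y' => f (x, y')) y)
    (hgmean : (∫ ω, hgr ω) = gradient (fun y' => g (x, y')) y)
    (hfvarint : Integrable (fun ω => ‖hfr ω - gradient (fun y' => f (x, y')) y‖ ^ 2))
    (hgvarint : Integrable (fun ω => ‖hgr ω - gradient (fun y' => g (x, y')) y‖ ^ 2))
    (hfvar : (∫ ω, ‖hfr ω - gradient (fun y' => f (x, y')) y‖ ^ 2) ≤ σf ^ 2)
    (hgvar : (∫ ω, ‖hgr ω - gradient (fun y' => g (x, y')) y‖ ^ 2) ≤ σg ^ 2)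
    (hlam : 2 * lf1 / μg ≤ lam)
    (hstep : α * (lf1 + lam * lg1) ≤ 1 / 4) :
    (∫ ω, ‖y - α • (hfr ω + lam • hgr ω) - ystarlam lam x‖ ^ 2) ≤
      (1 - 3 * μg * α * lam / 4) * ‖y - ystarlam lam x‖ ^ 2 +
        α ^ 2 * σf ^ 2 + α ^ 2 * lam ^ 2 * σg ^ 2 := by
  rcases subsingleton_or_nontrivial (EuclideanSpace ℝ (Fin dy)) with hsub | hnontriv
  · have hzero (v : EuclideanSpace ℝ (Fin dy)) : ‖v‖ ^ 2 = 0 := by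
      simp [Subsingleton.elim v 0]
    simp only [hzero, integral_zero, mul_zero, zero_add]
    positivity
  have hfd : Differentiable ℝ f := hf.differentiable one_ne_zero
  have hgd : Differentiable ℝ g := hg.differentiable one_ne_zero
  have hlf1 : 0 ≤ lf1 := by
    obtain ⟨v, hv⟩ := exists_ne (0 : EuclideanSpace ℝ (Fin dy))
    have h := (norm_nonneg _).trans (hf1 (0, v) 0)
    exact nonneg_of_mul_nonneg_left h (norm_pos_iff.2 (by simpa [Prod.ext_iff] using hv))
  have hlam0 : 0 ≤ lam := le_trans (by positivity) hlam
  have hlf1lam : 2 * lf1 ≤ lam * μg := (div_le_iff₀ hμg).1 hlam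
  have hftaylor := abs_sub_sub_inner_gradient_le_of_lipschitz_fderiv hfd hf1 x
  have hgtaylor := abs_sub_sub_inner_gradient_le_of_lipschitz_fderiv hgd hg1 x
  have hcontract := norm_sq_gradient_step_sub_le
    (φ := fun y' => f (x, y') + lam * (g (x, y') - g (x, ystar x)))
    (G := fun y' => gradient (fun y' => f (x, y')) y' + lam • gradient (fun y' => g (x, y')) y')
    (m := lam * μg / 2) (by positivity) hα hstep
    (fun y' v => by
      have hfbound := (abs_le.1 (hftaylor y' v)).1
      have hgconv := (hsc x).add_fderiv_add_le (y := y')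
        ((hgd (x, y')).comp y' (hasFDerivAt_prodMk_right x y').differentiableAt) v
      rw [← inner_gradient_left] at hgconv
      have hgbound := mul_le_mul_of_nonneg_left hgconv hlam0
      have hcurv := mul_le_mul_of_nonneg_right hlf1lam (sq_nonneg ‖v‖)
      simp only [inner_add_left, real_inner_smul_left]
      linarith)
    (fun y' v => by
      have hfbound := (abs_le.1 (hftaylor y' v)).2
      have hgbound := mul_le_mul_of_nonneg_left (abs_le.1 (hgtaylor y' v)).2 hlam0
      simp only [inner_add_left, real_inner_smul_left]
      linarith)
    (hystarlam lam x hlam) y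
  simp_rw [sub_right_comm y _ (ystarlam lam x)] at hcontract ⊢
  rw [integral_norm_sq_sub_smul_add_smul hindep hfint hgint hfmean hgmean hfvarint hgvarint]
  have hfnoise := mul_le_mul_of_nonneg_left hfvar (sq_nonneg α)
  have hgnoise := mul_le_mul_of_nonneg_left hgvar (by positivity : 0 ≤ α ^ 2 * lam ^ 2)
  linarith
end
end

section
/- Deterministic per-iteration descent of the bilevel objective: let λ ≥ 2 l_{f,1}/μ_g, let ŷ, ẑ ∈ ℝ^{d_y}, set q := ∇_x f(x, ŷ) + λ (∇_x g(x, ŷ) − ∇_x g(x, ẑ)), and let x' := x − ξ α q with step size satisfying ξ α l_{F,1} ≤ 1/2. Then F(x') − F(x) ≤ −(ξα/2) ‖∇F(x)‖² − (ξα/4) ‖q‖² + (3ξα/2) ( 4 l_{g,1}² λ² ‖ŷ − y*_λ(x)‖² + l_{g,1}² λ² ‖ẑ − y*(x)‖² + C_λ²/λ² ), where C_λ := (4 l_{f,0} l_{g,1}/μ_g²)·(l_{f,1} + 2 l_{f,0} l_{g,2}/μ_g). -/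
open Set

noncomputable section

open Filter Topology Asymptotics InnerProductSpace

section Auxiliary

set_option maxSynthPendingDepth 3

variable {E F : Type*}

/-- The gradient of a differentiable strongly convex function is strongly monotone. -/
lemma StrongConvexOn.le_fderiv_sub_apply_s15 [NormedAddCommGroup F] [InnerProductSpace ℝ F]
    {φ : F → ℝ} {m : ℝ} (hφ : StrongConvexOn univ m φ) (hd : Differentiable ℝ φ) (a v : F) :
    m * ‖v‖ ^ 2 ≤ (fderiv ℝ φ (a + v) - fderiv ℝ φ a) v := by
  have hconv := (strongConvexOn_iff_convex.mp hφ).comp_affineMap (AffineMap.lineMap a (a + v))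
  rw [preimage_univ] at hconv
  have hder : ∀ t : ℝ, HasDerivAt
      ((fun y => φ y - m / (2 : ℝ) * ‖y‖ ^ 2) ∘ (AffineMap.lineMap a (a + v) : ℝ →ᵃ[ℝ] F))
      (fderiv ℝ φ (a + t • v) v - m / 2 * (2 * inner ℝ (a + t • v) v)) t := by
    intro t
    have hline : HasDerivAt (fun t : ℝ => a + t • v) v t := by
      simpa using ((hasDerivAt_id t).smul_const v).const_add a
    have hfun : (fun y => φ y - m / (2 : ℝ) * ‖y‖ ^ 2) ∘
        (AffineMap.lineMap a (a + v) : ℝ →ᵃ[ℝ] F) =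
        fun t : ℝ => φ (a + t • v) - m / 2 * ‖a + t • v‖ ^ 2 := by
      ext s
      simp [AffineMap.lineMap_apply, add_comm]
    rw [hfun]
    exact ((hd (a + t • v)).hasFDerivAt.comp_hasDerivAt t hline).sub
      (hline.norm_sq.const_mul (m / 2))
  have hmono := hconv.monotoneOn_deriv (fun t _ => (hder t).differentiableAt)
    (mem_univ 0) (mem_univ 1) zero_le_one
  rw [(hder 0).deriv, (hder 1).deriv] at hmono
  simp only [zero_smul, add_zero, one_smul, inner_add_left, real_inner_self_eq_norm_sq] at hmono
  rw [sub_apply]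
  linarith

/-- The descent lemma for functions with Lipschitz derivative. -/
lemma le_add_fderiv_add_sq_of_fderiv_lipschitz [NormedAddCommGroup E] [NormedSpace ℝ E]
    {φ : E → ℝ} {L : ℝ} (hd : Differentiable ℝ φ)
    (hL : ∀ a b, ‖fderiv ℝ φ a - fderiv ℝ φ b‖ ≤ L * ‖a - b‖) (x v : E) :
    φ (x + v) ≤ φ x + fderiv ℝ φ x v + L / 2 * ‖v‖ ^ 2 := by
  have hline : ∀ t : ℝ, HasDerivAt (fun t : ℝ => φ (x + t • v)) (fderiv ℝ φ (x + t • v) v) t := by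
    intro t
    have : HasDerivAt (fun t : ℝ => x + t • v) v t := by
      simpa using ((hasDerivAt_id t).smul_const v).const_add x
    exact (hd (x + t • v)).hasFDerivAt.comp_hasDerivAt t this
  have hbd : ∀ t : ℝ, HasDerivAt
      (fun t : ℝ => φ x + t * fderiv ℝ φ x v + L / 2 * ‖v‖ ^ 2 * t ^ 2)
      (fderiv ℝ φ x v + L * ‖v‖ ^ 2 * t) t := by
    intro t
    have h₁ := ((hasDerivAt_id t).mul_const (fderiv ℝ φ x v)).const_add (φ x)
    have h₂ := ((hasDerivAt_id t).pow 2).const_mul (L / 2 * ‖v‖ ^ 2)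
    refine (h₁.add h₂).congr_deriv ?_
    simp
    ring
  have := image_le_of_deriv_right_le_deriv_boundary (a := 0) (b := 1)
    (fun t _ => (hline t).continuousAt.continuousWithinAt)
    (fun t _ => (hline t).hasDerivWithinAt) (by simp)
    (fun t _ => (hbd t).continuousAt.continuousWithinAt)
    (fun t _ => (hbd t).hasDerivWithinAt) (fun t ht => ?_) (right_mem_Icc.mpr zero_le_one)
  · simpa using this
  · have h₁ : (fderiv ℝ φ (x + t • v) - fderiv ℝ φ x) v ≤ L * ‖t • v‖ * ‖v‖ := by
      refine (Real.le_norm_self _).trans (ContinuousLinearMap.le_of_opNorm_le _ ?_ v)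
      simpa using hL (x + t • v) x
    rw [norm_smul, Real.norm_of_nonneg ht.1, sub_apply] at h₁
    linarith

/-- Quadratic bound on the first-order Taylor remainder of a map with Lipschitz derivative. -/
lemma norm_sub_sub_fderiv_le_of_fderiv_lipschitz [NormedAddCommGroup E] [NormedSpace ℝ E]
    [NormedAddCommGroup F] [NormedSpace ℝ F] {D : E → F} {L : ℝ} (hL₀ : 0 ≤ L)
    (hd : Differentiable ℝ D)
    (hL : ∀ a b, ‖fderiv ℝ D a - fderiv ℝ D b‖ ≤ L * ‖a - b‖) (a b : E) :
    ‖D b - D a - fderiv ℝ D a (b - a)‖ ≤ L * ‖b - a‖ ^ 2 := by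
  have := Convex.norm_image_sub_le_of_norm_fderiv_le' (𝕜 := ℝ) (f := D) (φ := fderiv ℝ D a)
    (C := L * ‖b - a‖) (fun z _ => hd z)
    (fun z hz => (hL z a).trans
      (mul_le_mul_of_nonneg_left (mem_closedBall_iff_norm.mp hz) hL₀))
    (convex_closedBall a ‖b - a‖) (Metric.mem_closedBall_self (norm_nonneg _))
    (mem_closedBall_iff_norm.mpr le_rfl)
  linarith

/-- A gradient step along `-q` for a function with `L`-Lipschitz gradient decreases the function
up to the squared error `‖q - ∇φ(x)‖²`. -/
lemma inexact_gradient_step_le [NormedAddCommGroup E] [InnerProductSpace ℝ E] [CompleteSpace E]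
    {φ : E → ℝ} {L s : ℝ} (hs : 0 ≤ s) (hsL : s * L ≤ 1 / 2) (hd : Differentiable ℝ φ)
    (hL : ∀ a b, ‖gradient φ a - gradient φ b‖ ≤ L * ‖a - b‖) (x q : E) :
    φ (x - s • q) - φ x ≤
      -(s / 2) * ‖gradient φ x‖ ^ 2 - s / 4 * ‖q‖ ^ 2 + s / 2 * ‖q - gradient φ x‖ ^ 2 := by
  have hL' : ∀ a b, ‖fderiv ℝ φ a - fderiv ℝ φ b‖ ≤ L * ‖a - b‖ := fun a b => by
    have h := hL a b
    rwa [gradient, gradient, ← map_sub, LinearIsometryEquiv.norm_map] at h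
  have h := le_add_fderiv_add_sq_of_fderiv_lipschitz hd hL' x (-(s • q))
  have hgrad : fderiv ℝ φ x (-(s • q)) = -(s * inner ℝ (gradient φ x) q) := by
    rw [gradient, toDual_symm_apply, map_neg, map_smul, smul_eq_mul]
  rw [← sub_eq_add_neg, hgrad, norm_neg, norm_smul, Real.norm_of_nonneg hs] at h
  have hsq := norm_sub_sq_real q (gradient φ x)
  rw [real_inner_comm] at hsq
  have hq : s * L * (s * ‖q‖ ^ 2) ≤ 1 / 2 * (s * ‖q‖ ^ 2) :=
    mul_le_mul_of_nonneg_right hsL (by positivity)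
  rw [hsq]
  linarith

section Partial

variable [NormedAddCommGroup E] [NormedSpace ℝ E] [NormedAddCommGroup F] [NormedSpace ℝ F]

lemma fderiv_partial_left {φ : E × F → ℝ} (hφ : Differentiable ℝ φ) (x : E) (y : F) :
    fderiv ℝ (fun x' => φ (x', y)) x = (fderiv ℝ φ (x, y)).comp (.inl ℝ E F) :=
  ((hφ (x, y)).hasFDerivAt.comp x (hasFDerivAt_prodMk_left x y)).fderiv

lemma fderiv_partial_right {φ : E × F → ℝ} (hφ : Differentiable ℝ φ) (x : E) (y : F) :
    fderiv ℝ (fun y' => φ (x, y')) y = (fderiv ℝ φ (x, y)).comp (.inr ℝ E F) :=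
  ((hφ (x, y)).hasFDerivAt.comp y (hasFDerivAt_prodMk_right x y)).fderiv

lemma norm_comp_inl_le (T : E × F →L[ℝ] ℝ) : ‖T.comp (.inl ℝ E F)‖ ≤ ‖T‖ :=
  ContinuousLinearMap.opNorm_le_bound _ (norm_nonneg _) fun h => by
    simpa using T.le_opNorm (h, 0)

end Partial

variable [NormedAddCommGroup E] [NormedSpace ℝ E] [NormedAddCommGroup F] [InnerProductSpace ℝ F]

lemma le_fderiv_sub_apply_of_strongConvexOn_right {g : E × F → ℝ} {m : ℝ}
    (hg : Differentiable ℝ g) {x : E} (hsc : StrongConvexOn univ m (fun y => g (x, y))) (a v : F) :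
    m * ‖v‖ ^ 2 ≤ (fderiv ℝ g (x, a + v) - fderiv ℝ g (x, a)) (0, v) := by
  have h := hsc.le_fderiv_sub_apply_s15 (by fun_prop) a v
  rw [fderiv_partial_right hg, fderiv_partial_right hg] at h
  simpa using h

/-- Coercivity of the partial Hessian of a partially strongly convex function. -/
lemma le_fderiv_fderiv_apply_of_strongConvexOn_right {g : E × F → ℝ} {m : ℝ}
    (hg : ContDiff ℝ 2 g) {x : E} (hsc : StrongConvexOn univ m (fun y => g (x, y))) (y v : F) :
    m * ‖v‖ ^ 2 ≤ fderiv ℝ (fderiv ℝ g) (x, y) (0, v) (0, v) := by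
  have hD : Differentiable ℝ (fderiv ℝ g) :=
    (hg.fderiv_right (m := 1) (by norm_num)).differentiable one_ne_zero
  have hder : HasDerivAt (fun t : ℝ => fderiv ℝ g (x, y + t • v) (0, v))
      (fderiv ℝ (fderiv ℝ g) (x, y) (0, v) (0, v)) 0 := by
    have hline : HasDerivAt (fun t : ℝ => (x, y + t • v)) ((0 : E), v) 0 := by
      refine (hasDerivAt_const _ _).prodMk ?_
      simpa using ((hasDerivAt_id (0 : ℝ)).smul_const v).const_add y
    have h := HasFDerivAt.comp_hasDerivAt (0 : ℝ) (f := fun t : ℝ => (x, y + t • v))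
      (hD _).hasFDerivAt hline
    rw [zero_smul, add_zero] at h
    simpa using h.clm_apply (hasDerivAt_const (0 : ℝ) ((0 : E), v))
  refine ge_of_tendsto hder.tendsto_slope_zero_right ?_
  filter_upwards [self_mem_nhdsWithin] with t (ht : 0 < t)
  have h := le_fderiv_sub_apply_of_strongConvexOn_right (hg.differentiable two_ne_zero) hsc y (t • v)
  have hsmul : ((0 : E), t • v) = t • ((0 : E), v) := by simp
  rw [hsmul, map_smul, norm_smul, Real.norm_of_nonneg ht.le, sub_apply, smul_eq_mul] at h
  simp only [zero_add, zero_smul, add_zero, smul_eq_mul]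
  rw [le_inv_mul_iff₀ ht]
  refine le_of_mul_le_mul_left ?_ ht
  linarith

lemma fderiv_apply_inr_eq_zero_of_forall_le {φ : E × F → ℝ} (hφ : Differentiable ℝ φ) {x : E}
    {y : F} (hmin : ∀ y', φ (x, y) ≤ φ (x, y')) (v : F) : fderiv ℝ φ (x, y) (0, v) = 0 := by
  have h : fderiv ℝ (fun y' => φ (x, y')) y = 0 :=
    IsLocalMin.fderiv_eq_zero (Eventually.of_forall hmin)
  rw [fderiv_partial_right hφ] at h
  simpa using DFunLike.congr_fun h v

/-- The minimizer of a partially strongly convex function depends on the parameter in a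
Lipschitz way. -/
lemma norm_minimizer_sub_le {g : E × F → ℝ} {m L : ℝ} (hm : 0 < m)
    (hg : Differentiable ℝ g) (hL : ∀ p q, ‖fderiv ℝ g p - fderiv ℝ g q‖ ≤ L * ‖p - q‖)
    (hsc : ∀ x, StrongConvexOn univ m (fun y => g (x, y))) {ystar : E → F}
    (hystar : ∀ x y, g (x, ystar x) ≤ g (x, y)) (x x' : E) :
    ‖ystar x' - ystar x‖ ≤ L / m * ‖x' - x‖ := by
  set δ := ystar x' - ystar x with hδ
  have h₁ := le_fderiv_sub_apply_of_strongConvexOn_right hg (hsc x') (ystar x) δ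
  rw [sub_apply, hδ, add_sub_cancel, ← hδ,
    fderiv_apply_inr_eq_zero_of_forall_le hg (hystar x')] at h₁
  have h₂ := fderiv_apply_inr_eq_zero_of_forall_le hg (hystar x) δ
  have h₃ : |(fderiv ℝ g (x, ystar x) - fderiv ℝ g (x', ystar x)) (0, δ)| ≤
      L * ‖x' - x‖ * ‖δ‖ := by
    have := ContinuousLinearMap.le_of_opNorm_le _ (hL (x, ystar x) (x', ystar x)) (0, δ)
    simpa [norm_sub_rev x x'] using this
  rw [sub_apply, h₂] at h₃
  have h₄ : m * ‖δ‖ * ‖δ‖ ≤ L * ‖x' - x‖ * ‖δ‖ := by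
    linarith [le_abs_self (0 - fderiv ℝ g (x', ystar x) (0, δ))]
  have h₅ : 0 ≤ L * ‖x' - x‖ := by
    have := (norm_nonneg (fderiv ℝ g (x, ystar x) - fderiv ℝ g (x', ystar x))).trans (hL _ _)
    simpa [norm_sub_rev x x'] using this
  rw [div_mul_eq_mul_div, le_div_iff₀' hm]
  rcases (norm_nonneg δ).eq_or_lt with h | h
  · rwa [← h, mul_zero]
  · exact le_of_mul_le_mul_right h₄ h

/-- Existence of the adjoint solution `w` of `∂²_yy g (w, ·) = ℓ`. -/
lemma exists_adjoint_solution [CompleteSpace F] {B : E × F →L[ℝ] E × F →L[ℝ] ℝ} {m : ℝ}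
    (hm : 0 < m) (hB : ∀ v : F, m * ‖v‖ ^ 2 ≤ B (0, v) (0, v)) (ℓ : E × F →L[ℝ] ℝ) :
    ∃ w : F, ∀ k : F, B (0, w) (0, k) = ℓ (0, k) := by
  let B' : F →L[ℝ] F →L[ℝ] ℝ := B.bilinearComp (.inr ℝ E F) (.inr ℝ E F)
  have hB' : IsCoercive B' := ⟨m, hm, fun u => by
    simpa [B', pow_two, mul_assoc] using hB u⟩
  refine ⟨hB'.continuousLinearEquivOfBilin.symm ((toDual ℝ F).symm (ℓ.comp (.inr ℝ E F))),
    fun k => ?_⟩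
  have h := hB'.continuousLinearEquivOfBilin_apply
    (hB'.continuousLinearEquivOfBilin.symm ((toDual ℝ F).symm (ℓ.comp (.inr ℝ E F)))) k
  rw [ContinuousLinearEquiv.apply_symm_apply, toDual_symm_apply] at h
  simpa [B'] using h.symm

/-- Implicit differentiation of `x ↦ f (x, y*(x))` by means of an adjoint solution `w`. -/
lemma hasFDerivAt_comp_minimizer {f g : E × F → ℝ} {m L : ℝ} (hm : 0 < m)
    (hf : Differentiable ℝ f) (hg : ContDiff ℝ 2 g)
    (hL : ∀ p q, ‖fderiv ℝ g p - fderiv ℝ g q‖ ≤ L * ‖p - q‖)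
    (hsc : ∀ x, StrongConvexOn univ m (fun y => g (x, y))) {ystar : E → F}
    (hystar : ∀ x y, g (x, ystar x) ≤ g (x, y)) (x : E) {w : F}
    (hw : ∀ k : F, fderiv ℝ (fderiv ℝ g) (x, ystar x) (0, w) (0, k) =
      fderiv ℝ f (x, ystar x) (0, k)) :
    HasFDerivAt (fun x' => f (x', ystar x'))
      ((fderiv ℝ f (x, ystar x) - fderiv ℝ (fderiv ℝ g) (x, ystar x) (0, w)).comp
        (.inl ℝ E F)) x := by
  have hgd : Differentiable ℝ g := hg.differentiable two_ne_zero
  have hD : Differentiable ℝ (fderiv ℝ g) :=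
    (hg.fderiv_right (m := 1) (by norm_num)).differentiable one_ne_zero
  have hsymm := hg.contDiffAt.isSymmSndFDerivAt (x := (x, ystar x)) (by simp)
  have hbig : (fun x' => (x', ystar x') - (x, ystar x)) =O[𝓝 x] fun x' => x' - x := by
    refine IsBigO.of_bound (max 1 (L / m)) (Eventually.of_forall fun x' => ?_)
    rw [Prod.mk_sub_mk, Prod.norm_mk]
    refine max_le ?_ ((norm_minimizer_sub_le hm hgd hL hsc hystar x x').trans ?_)
    · exact le_mul_of_one_le_left (norm_nonneg _) (le_max_left _ _)
    · exact mul_le_mul_of_nonneg_right (le_max_right _ _) (norm_nonneg _)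
  have hcont : Tendsto (fun x' => (x', ystar x')) (𝓝 x) (𝓝 (x, ystar x)) := by
    rw [← tendsto_sub_nhds_zero_iff]
    exact hbig.trans_tendsto (tendsto_sub_nhds_zero_iff.mpr tendsto_id)
  have h₁ := ((hf (x, ystar x)).hasFDerivAt.isLittleO.comp_tendsto hcont).trans_isBigO hbig
  have hD' : HasFDerivAt (fderiv ℝ g) _ (x, ystar x) := (hD (x, ystar x)).hasFDerivAt
  have h₂ := (hD'.isLittleO.comp_tendsto hcont).trans_isBigO hbig
  have h₃ := ((ContinuousLinearMap.apply ℝ ℝ ((0 : E), w)).isBigO_comp _ _).trans_isLittleO h₂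
  refine .of_isLittleO ((h₁.sub h₃).congr_left fun x' => ?_)
  have hz₁ := fderiv_apply_inr_eq_zero_of_forall_le hgd (hystar x') w
  have hz₂ := fderiv_apply_inr_eq_zero_of_forall_le hgd (hystar x) w
  have hsplit : (x', ystar x') - (x, ystar x) = (x' - x, 0) + (0, ystar x' - ystar x) := by
    simp
  have hs := hsymm (0, w) ((x', ystar x') - (x, ystar x))
  have hk := hw (ystar x' - ystar x)
  simp only [Function.comp_apply, ContinuousLinearMap.apply_apply, sub_apply,
    hz₁, hz₂, ← hs, ContinuousLinearMap.comp_apply, ContinuousLinearMap.inl_apply]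
  rw [hsplit, map_add, map_add, hk]
  ring

/-- The gradient of the value function of the penalized problem `f + lam (g - g*)` approximates
the gradient of `x ↦ f (x, y*(x))`. -/
lemma norm_penalty_fderiv_sub_le [CompleteSpace F] {f g : E × F → ℝ} {lf1 lg1 lg2 m lam : ℝ}
    (hm : 0 < m) (hlg1 : 0 ≤ lg1) (hlg2 : 0 ≤ lg2) (hlam : 0 ≤ lam)
    (hf : Differentiable ℝ f) (hg : ContDiff ℝ 2 g)
    (hf1 : ∀ p q, ‖fderiv ℝ f p - fderiv ℝ f q‖ ≤ lf1 * ‖p - q‖)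
    (hg1 : ∀ p q, ‖fderiv ℝ g p - fderiv ℝ g q‖ ≤ lg1 * ‖p - q‖)
    (hg2 : ∀ p q, ‖fderiv ℝ (fderiv ℝ g) p - fderiv ℝ (fderiv ℝ g) q‖ ≤ lg2 * ‖p - q‖)
    (hsc : ∀ x, StrongConvexOn univ m (fun y => g (x, y))) {ystar : E → F}
    (hystar : ∀ x y, g (x, ystar x) ≤ g (x, y)) (x : E) {ylam : F}
    (hylam : ∀ k : F, fderiv ℝ f (x, ylam) (0, k) + lam * fderiv ℝ g (x, ylam) (0, k) = 0) :
    ‖(fderiv ℝ f (x, ylam) + lam • (fderiv ℝ g (x, ylam) - fderiv ℝ g (x, ystar x))).comp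
        (.inl ℝ E F) - fderiv ℝ (fun x' => f (x', ystar x')) x‖ ≤
      (1 + lg1 / m) * (lf1 * ‖ylam - ystar x‖ + lam * (lg2 * ‖ylam - ystar x‖ ^ 2)) := by
  have hgd : Differentiable ℝ g := hg.differentiable two_ne_zero
  have hD : Differentiable ℝ (fderiv ℝ g) :=
    (hg.fderiv_right (m := 1) (by norm_num)).differentiable one_ne_zero
  have hcoer := le_fderiv_fderiv_apply_of_strongConvexOn_right hg (hsc x) (ystar x)
  obtain ⟨w, hw⟩ := exists_adjoint_solution hm hcoer (fderiv ℝ f (x, ystar x))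
  rw [(hasFDerivAt_comp_minimizer hm hf hg hg1 hsc hystar x hw).fderiv]
  have hBnorm : ‖fderiv ℝ (fderiv ℝ g) (x, ystar x)‖ ≤ lg1 :=
    norm_fderiv_le_of_lip' ℝ hlg1 (Eventually.of_forall fun p => hg1 p _)
  set B := fderiv ℝ (fderiv ℝ g) (x, ystar x)
  set Δ := ylam - ystar x with hΔ
  have hpair : (x, ylam) - (x, ystar x) = ((0 : E), Δ) := by simp [hΔ]
  have hpairnorm : ‖((0 : E), Δ)‖ = ‖Δ‖ := by simp
  set r := fderiv ℝ g (x, ylam) - fderiv ℝ g (x, ystar x) - B (0, Δ) with hr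
  set T := (fderiv ℝ f (x, ylam) - fderiv ℝ f (x, ystar x)) + lam • r with hT
  set R := lf1 * ‖Δ‖ + lam * (lg2 * ‖Δ‖ ^ 2)
  have hTR : ‖T‖ ≤ R := by
    have h₁ := hf1 (x, ylam) (x, ystar x)
    have h₂ := norm_sub_sub_fderiv_le_of_fderiv_lipschitz hlg2 hD hg2 (x, ystar x) (x, ylam)
    rw [hpair, hpairnorm] at h₁ h₂
    refine (norm_add_le _ _).trans (add_le_add h₁ ?_)
    rw [norm_smul, Real.norm_of_nonneg hlam]
    exact mul_le_mul_of_nonneg_left h₂ hlam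
  set u := lam • Δ + w with hu
  have hBu : B (0, u) = lam • B (0, Δ) + B (0, w) := by
    rw [← map_smul, ← map_add]
    simp [hu]
  have hBT : B (0, u) (0, u) = -T (0, u) := by
    have h₁ := hylam u
    have h₂ := fderiv_apply_inr_eq_zero_of_forall_le hgd (hystar x) u
    rw [hBu]
    simp only [hT, hr, add_apply, sub_apply, smul_apply, smul_eq_mul, hw u, h₂]
    linarith
  have hunorm : ‖u‖ ≤ R / m := by
    have h₁ := hcoer u
    have h₂ : ‖T (0, u)‖ ≤ R * ‖u‖ := by
      simpa using T.le_of_opNorm_le hTR (0, u)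
    rw [hBT] at h₁
    have h₃ : m * ‖u‖ * ‖u‖ ≤ R * ‖u‖ := by
      linarith [neg_le_abs (T (0, u)), Real.norm_eq_abs (T (0, u))]
    rw [le_div_iff₀' hm]
    rcases (norm_nonneg u).eq_or_lt with h | h
    · rw [← h, mul_zero]
      exact (norm_nonneg T).trans hTR
    · exact le_of_mul_le_mul_right h₃ h
  have hdiff : (fderiv ℝ f (x, ylam) +
        lam • (fderiv ℝ g (x, ylam) - fderiv ℝ g (x, ystar x))).comp (.inl ℝ E F) -
      (fderiv ℝ f (x, ystar x) - B (0, w)).comp (.inl ℝ E F) =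
      (T + B (0, u)).comp (.inl ℝ E F) := by
    rw [← ContinuousLinearMap.sub_comp, hBu, hT, hr]
    congr 1
    module
  rw [hdiff]
  calc _ ≤ ‖T + B (0, u)‖ := norm_comp_inl_le _
    _ ≤ ‖T‖ + ‖B (0, u)‖ := norm_add_le _ _
    _ ≤ R + lg1 * (R / m) := by
      refine add_le_add hTR ((B.le_of_opNorm_le hBnorm (0, u)).trans ?_)
      refine mul_le_mul_of_nonneg_left ?_ hlg1
      simpa using hunorm
    _ = (1 + lg1 / m) * R := by ring

lemma nonneg_of_norm_sub_le_mul {G H : Type*} [NormedAddCommGroup G] [Nontrivial G]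
    [SeminormedAddCommGroup H] {D : G → H} {L : ℝ} (hL : ∀ p q, ‖D p - D q‖ ≤ L * ‖p - q‖) :
    0 ≤ L := by
  obtain ⟨a, ha⟩ := exists_ne (0 : G)
  have h := (norm_nonneg _).trans (hL a 0)
  rw [sub_zero] at h
  exact nonneg_of_mul_nonneg_left h (norm_pos_iff.mpr ha)

end Auxiliary

theorem deterministic_descent_step
    (dx dy : ℕ)
    (f g : EuclideanSpace ℝ (Fin dx) × EuclideanSpace ℝ (Fin dy) → ℝ)
    (lf0 lf1 lg1 lg2 μg lF1 ξ α : ℝ)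
    (hμg : 0 < μg) (hlF1 : 0 < lF1) (hξ : 0 < ξ) (hα : 0 < α)
    (hf : ContDiff ℝ 1 f)
    (hf1 : ∀ p q, ‖fderiv ℝ f p - fderiv ℝ f q‖ ≤ lf1 * ‖p - q‖)
    (hg : ContDiff ℝ 2 g)
    (hg1 : ∀ p q, ‖fderiv ℝ g p - fderiv ℝ g q‖ ≤ lg1 * ‖p - q‖)
    (hg2 : ∀ p q, ‖fderiv ℝ (fderiv ℝ g) p - fderiv ℝ (fderiv ℝ g) q‖ ≤ lg2 * ‖p - q‖)
    (hfy0 : ∀ x y, ‖gradient (fun y' => f (x, y')) y‖ ≤ lf0)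
    (hsc : ∀ x, StrongConvexOn univ μg (fun y => g (x, y)))
    (ystar : EuclideanSpace ℝ (Fin dx) → EuclideanSpace ℝ (Fin dy))
    (hystar : ∀ x y, g (x, ystar x) ≤ g (x, y))
    (hFdiff : Differentiable ℝ (fun x => f (x, ystar x)))
    (hFlip : ∀ x₁ x₂, ‖gradient (fun x => f (x, ystar x)) x₁ -
        gradient (fun x => f (x, ystar x)) x₂‖ ≤ lF1 * ‖x₁ - x₂‖)
    (ystarlam : ℝ → EuclideanSpace ℝ (Fin dx) → EuclideanSpace ℝ (Fin dy))
    (hystarlam : ∀ lam x, 2 * lf1 / μg ≤ lam → ∀ y,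
      f (x, ystarlam lam x) + lam * (g (x, ystarlam lam x) - g (x, ystar x)) ≤
      f (x, y) + lam * (g (x, y) - g (x, ystar x)))
    (hstep : ξ * α * lF1 ≤ 1 / 2) :
    ∀ (x : EuclideanSpace ℝ (Fin dx)) (yhat zhat : EuclideanSpace ℝ (Fin dy)) (lam : ℝ),
      2 * lf1 / μg ≤ lam →
      ∀ q : EuclideanSpace ℝ (Fin dx),
        q = gradient (fun x' => f (x', yhat)) x +
          lam • (gradient (fun x' => g (x', yhat)) x - gradient (fun x' => g (x', zhat)) x) →
        f (x - (ξ * α) • q, ystar (x - (ξ * α) • q)) - f (x, ystar x) ≤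
          -(ξ * α / 2) * ‖gradient (fun x' => f (x', ystar x')) x‖ ^ 2 -
            ξ * α / 4 * ‖q‖ ^ 2 +
            3 * ξ * α / 2 *
              (4 * lg1 ^ 2 * lam ^ 2 * ‖yhat - ystarlam lam x‖ ^ 2 +
                lg1 ^ 2 * lam ^ 2 * ‖zhat - ystar x‖ ^ 2 +
                (4 * lf0 * lg1 / μg ^ 2 * (lf1 + 2 * lf0 * lg2 / μg)) ^ 2 / lam ^ 2) := by
  intro x yhat zhat lam hlam q hq
  rw [show 3 * ξ * α / 2 = 3 * (ξ * α / 2) by ring]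
  have hs : 0 < ξ * α := mul_pos hξ hα
  refine (inexact_gradient_step_le hs.le hstep hFdiff hFlip x q).trans ?_
  rw [add_le_add_iff_left, mul_comm (3 : ℝ) (ξ * α / 2), mul_assoc]
  refine mul_le_mul_of_nonneg_left ?_ (by positivity)
  rcases subsingleton_or_nontrivial (EuclideanSpace ℝ (Fin dx)) with hsub | hnon
  · rw [Subsingleton.elim (q - _) 0, norm_zero, zero_pow two_ne_zero]
    positivity
  have hlf1 : 0 ≤ lf1 := nonneg_of_norm_sub_le_mul hf1
  have hlg1 : 0 ≤ lg1 := nonneg_of_norm_sub_le_mul hg1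
  have hlg2 : 0 ≤ lg2 := by
    set_option maxSynthPendingDepth 3 in
    exact nonneg_of_norm_sub_le_mul hg2
  have hlf0 : 0 ≤ lf0 := (norm_nonneg _).trans (hfy0 x 0)
  have hlam0 : 0 ≤ lam := le_trans (by positivity) hlam
  have hlf1lam : 2 * lf1 ≤ lam * μg := (div_le_iff₀ hμg).mp hlam
  have hfd : Differentiable ℝ f := hf.differentiable one_ne_zero
  have hgd : Differentiable ℝ g := hg.differentiable two_ne_zero
  set ylam := ystarlam lam x
  have hylam : ∀ k, fderiv ℝ f (x, ylam) (0, k) + lam * fderiv ℝ g (x, ylam) (0, k) = 0 := by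
    intro k
    have h := fderiv_apply_inr_eq_zero_of_forall_le (φ := fun p => f p + lam * g p)
      (hfd.add (hgd.const_mul lam)) (x := x) (y := ylam)
      (fun y => by linarith [hystarlam lam x hlam y]) k
    rw [fderiv_fun_add (hfd _) ((hgd _).const_mul lam), fderiv_const_mul (hgd _)] at h
    simpa using h
  have hμlg1 : ∀ k : EuclideanSpace ℝ (Fin dy), μg * ‖k‖ ≤ lg1 * ‖k‖ := by
    intro k
    have h₁ := le_fderiv_sub_apply_of_strongConvexOn_right hgd (hsc x) 0 k
    have h₂ := ContinuousLinearMap.le_of_opNorm_le _ (hg1 (x, 0 + k) (x, 0)) (0, k)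
    simp only [zero_add, Prod.mk_sub_mk, sub_self, sub_zero, Prod.norm_mk, norm_zero] at h₁ h₂
    rw [max_eq_right (norm_nonneg k)] at h₂
    have h₃ := h₁.trans ((Real.le_norm_self _).trans h₂)
    rcases (norm_nonneg k).eq_or_lt with h | h
    · simp [← h]
    · exact le_of_mul_le_mul_right (by linarith) h
  have hbias := norm_penalty_fderiv_sub_le hμg hlg1 hlg2 hlam0 hfd hg hf1 hg1 hg2 hsc hystar x
    hylam
  have hΔ : lam * (μg * ‖ylam - ystar x‖) ≤ lf0 := by
    set Δ := ylam - ystar x with hΔdef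
    have h₁ := le_fderiv_sub_apply_of_strongConvexOn_right hgd (hsc x) (ystar x) Δ
    rw [sub_apply, fderiv_apply_inr_eq_zero_of_forall_le hgd (hystar x), hΔdef, add_sub_cancel,
      ← hΔdef] at h₁
    have h₂ : ‖fderiv ℝ f (x, ylam) (0, Δ)‖ ≤ lf0 * ‖Δ‖ := by
      have h₃ := hfy0 x ylam
      rw [gradient, LinearIsometryEquiv.norm_map, fderiv_partial_right hfd] at h₃
      simpa using ContinuousLinearMap.le_of_opNorm_le _ h₃ Δ
    have h₄ : lam * (μg * ‖Δ‖) * ‖Δ‖ ≤ lf0 * ‖Δ‖ := by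
      have h₅ := mul_le_mul_of_nonneg_left h₁ hlam0
      linarith [hylam Δ, neg_le_abs (fderiv ℝ f (x, ylam) (0, Δ)),
        Real.norm_eq_abs (fderiv ℝ f (x, ylam) (0, Δ))]
    rcases (norm_nonneg Δ).eq_or_lt with h | h
    · simpa [← h] using hlf0
    · exact le_of_mul_le_mul_right h₄ h
  set C := 4 * lf0 * lg1 / μg ^ 2 * (lf1 + 2 * lf0 * lg2 / μg) with hC
  have hbiasC : (1 + lg1 / μg) * (lf1 * ‖ylam - ystar x‖ +
      lam * (lg2 * ‖ylam - ystar x‖ ^ 2)) ≤ C / lam := by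
    have hk := hμlg1 (ylam - ystar x)
    have hd₀ := norm_nonneg (ylam - ystar x)
    generalize ‖ylam - ystar x‖ = d at hk hΔ hd₀ ⊢
    rcases hlam0.eq_or_lt with rfl | hpos
    · have : lf1 = 0 := by linarith
      simp [this]
    have he : lam * d ≤ lf0 / μg := by
      rw [le_div_iff₀ hμg]
      linarith
    have hfac : (1 + lg1 / μg) * (lam * d) ≤ 2 * lg1 / μg * (lam * d) := by
      have h : d ≤ lg1 / μg * d := by
        rw [div_mul_eq_mul_div, le_div_iff₀ hμg]
        linarith
      have h' := mul_le_mul_of_nonneg_left h hlam0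
      calc (1 + lg1 / μg) * (lam * d) = lam * d + lam * (lg1 / μg * d) := by ring
        _ ≤ lam * (lg1 / μg * d) + lam * (lg1 / μg * d) := by gcongr
        _ = 2 * lg1 / μg * (lam * d) := by ring
    rw [le_div_iff₀ hpos]
    calc (1 + lg1 / μg) * (lf1 * d + lam * (lg2 * d ^ 2)) * lam
        = (1 + lg1 / μg) * (lam * d) * (lf1 + lg2 * (lam * d)) := by ring
      _ ≤ 2 * lg1 / μg * (lam * d) * (lf1 + lg2 * (lam * d)) := by gcongr
      _ ≤ 2 * lg1 / μg * (lf0 / μg) * (lf1 + lg2 * (lf0 / μg)) := by gcongr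
      _ = 2 * lf0 * lg1 / μg ^ 2 * (lf1 + 1 * lf0 * lg2 / μg) := by ring
      _ ≤ C := by
        rw [hC]
        gcongr <;> norm_num
  have hqfd : ‖q - gradient (fun x' => f (x', ystar x')) x‖ =
      ‖(fderiv ℝ f (x, yhat) + lam • (fderiv ℝ g (x, yhat) - fderiv ℝ g (x, zhat))).comp
        (.inl ℝ _ _) - fderiv ℝ (fun x' => f (x', ystar x')) x‖ := by
    rw [hq, gradient, gradient, gradient, gradient, ← map_sub, ← map_smul, ← map_add, ← map_sub,
      LinearIsometryEquiv.norm_map, fderiv_partial_left hfd, fderiv_partial_left hgd,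
      fderiv_partial_left hgd, ← ContinuousLinearMap.sub_comp, ← ContinuousLinearMap.smul_comp,
      ← ContinuousLinearMap.add_comp]
  have hinexact : ‖(fderiv ℝ f (x, yhat) +
        lam • (fderiv ℝ g (x, yhat) - fderiv ℝ g (x, zhat))).comp (.inl ℝ _ _) -
      (fderiv ℝ f (x, ylam) + lam • (fderiv ℝ g (x, ylam) - fderiv ℝ g (x, ystar x))).comp
        (.inl ℝ _ _)‖ ≤
      2 * lg1 * lam * ‖yhat - ylam‖ + lg1 * lam * ‖zhat - ystar x‖ := by
    rw [← ContinuousLinearMap.sub_comp]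
    refine (norm_comp_inl_le _).trans ?_
    have hsplit : fderiv ℝ f (x, yhat) + lam • (fderiv ℝ g (x, yhat) - fderiv ℝ g (x, zhat)) -
        (fderiv ℝ f (x, ylam) + lam • (fderiv ℝ g (x, ylam) - fderiv ℝ g (x, ystar x))) =
        (fderiv ℝ f (x, yhat) - fderiv ℝ f (x, ylam)) +
          lam • (fderiv ℝ g (x, yhat) - fderiv ℝ g (x, ylam)) -
          lam • (fderiv ℝ g (x, zhat) - fderiv ℝ g (x, ystar x)) := by
      module
    have h₁ := hf1 (x, yhat) (x, ylam)
    have h₂ := mul_le_mul_of_nonneg_left (hg1 (x, yhat) (x, ylam)) hlam0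
    have h₃ := mul_le_mul_of_nonneg_left (hg1 (x, zhat) (x, ystar x)) hlam0
    simp only [Prod.mk_sub_mk, sub_self, Prod.norm_mk, norm_zero, norm_nonneg, sup_of_le_right]
      at h₁ h₂ h₃
    have h₄ : lf1 * ‖yhat - ylam‖ ≤ lam * (lg1 * ‖yhat - ylam‖) := by
      have h₅ := mul_le_mul_of_nonneg_left (hμlg1 (yhat - ylam)) hlam0
      have h₆ := mul_le_mul_of_nonneg_right hlf1lam (norm_nonneg (yhat - ylam))
      have h₇ := mul_nonneg hlf1 (norm_nonneg (yhat - ylam))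
      linarith
    rw [hsplit]
    refine (norm_sub_le _ _).trans ((add_le_add (norm_add_le _ _) le_rfl).trans ?_)
    rw [norm_smul, norm_smul, Real.norm_of_nonneg hlam0]
    linarith
  have htotal := (norm_sub_le_norm_sub_add_norm_sub _ _ _).trans
    (add_le_add hinexact (hbias.trans hbiasC))
  rw [← hqfd] at htotal
  calc ‖q - gradient (fun x' => f (x', ystar x')) x‖ ^ 2
      ≤ (2 * lg1 * lam * ‖yhat - ylam‖ + lg1 * lam * ‖zhat - ystar x‖ + C / lam) ^ 2 := by
        gcongr
    _ ≤ 3 * ((2 * lg1 * lam * ‖yhat - ylam‖) ^ 2 + (lg1 * lam * ‖zhat - ystar x‖) ^ 2 +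
          (C / lam) ^ 2) := by
        linarith [sq_nonneg (2 * lg1 * lam * ‖yhat - ylam‖ - lg1 * lam * ‖zhat - ystar x‖),
          sq_nonneg (2 * lg1 * lam * ‖yhat - ylam‖ - C / lam),
          sq_nonneg (lg1 * lam * ‖zhat - ystar x‖ - C / lam)]
    _ = _ := by ring
end
end

section
/- The multiplier sequence of the F²SA step-size design stays on the prescribed polynomial schedule: λ_k = γ_k/(2 α_k) = (c_γ/(2 c_α)) (k + k₀)^{a−c} for all k ≥ 0. In particular, the minimum in the definition of δ_k is always attained by its second argument. -/
theorem rpow_add_one_sub_rpow_le {x p : ℝ} (hx : 0 < x) (hp : p ≤ 1) :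
    (x + 1) ^ p - x ^ p ≤ x ^ (p - 1) := by
  have hsplit : x + 1 = x * (1 + 1 / x) := by field_simp
  have hone : 1 ≤ 1 + 1 / x := by
    have := one_div_pos.mpr hx
    linarith
  have hle : (1 + 1 / x) ^ p ≤ 1 + 1 / x := by
    simpa using Real.rpow_le_rpow_of_exponent_le hone hp
  rw [hsplit, Real.mul_rpow hx.le (by linarith), Real.rpow_sub_one hx.ne']
  calc x ^ p * (1 + 1 / x) ^ p - x ^ p ≤ x ^ p * (1 + 1 / x) - x ^ p := by gcongr
    _ = x ^ p / x := by ring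

/-- With `y` the initial and `x` the current shifted index, one step of the schedule `x ^ (a - c)`
is at most the quadratic growth term. -/
theorem schedule_increment_le {a c x y : ℝ} (hc : 0 ≤ c) (hca : c ≤ a) (ha : a ≤ 1)
    (hy : 0 < y) (hyx : y ≤ x) :
    (x + 1) ^ (a - c) - x ^ (a - c) ≤ (x ^ (a - c)) ^ 2 / (y ^ (1 - c) * x ^ a) := by
  have hx : 0 < x := hy.trans_le hyx
  have hyc : 0 < y ^ (1 - c) := Real.rpow_pos_of_pos hy _
  have hxa : 0 < x ^ a := Real.rpow_pos_of_pos hx _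
  refine (rpow_add_one_sub_rpow_le hx (by linarith)).trans ?_
  rw [le_div_iff₀ (by positivity)]
  calc x ^ (a - c - 1) * (y ^ (1 - c) * x ^ a)
      ≤ x ^ (a - c - 1) * (x ^ (1 - c) * x ^ a) := by
        gcongr
        linarith
    _ = (x ^ (a - c)) ^ 2 := by
        rw [← Real.rpow_add hx, ← Real.rpow_add hx, sq, ← Real.rpow_add hx]
        congr 1
        ring

theorem multiplier_schedule_polynomial
    (a c μg cα cγ : ℝ) (T k₀ : ℕ)
    (hc : 0 ≤ c) (hca : c ≤ a) (ha : a ≤ 1)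
    (hT : 32 ≤ T) (hμg : 0 < μg) (hk₀ : 1 ≤ k₀) (hcα : 0 < cα)
    (hcγ : cγ = 1 / (μg * (k₀ : ℝ) ^ (1 - c)))
    (α γ δ lam : ℕ → ℝ)
    (hα : ∀ k, α k = cα / ((k : ℝ) + (k₀ : ℝ)) ^ a)
    (hγ : ∀ k, γ k = cγ / ((k : ℝ) + (k₀ : ℝ)) ^ c)
    (hlam0 : lam 0 = γ 0 / (2 * α 0))
    (hδ : ∀ k, δ k = min ((T : ℝ) * μg / 16 * α k * lam k ^ 2)
        (γ (k + 1) / (2 * α (k + 1)) - lam k))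
    (hrec : ∀ k, lam (k + 1) = lam k + δ k) :
    ∀ k : ℕ,
      lam k = γ k / (2 * α k) ∧
      lam k = cγ / (2 * cα) * ((k : ℝ) + (k₀ : ℝ)) ^ (a - c) ∧
      δ k = γ (k + 1) / (2 * α (k + 1)) - lam k := by
  have hk₀_pos : (0 : ℝ) < k₀ := by exact_mod_cast hk₀
  have hpos (k : ℕ) : (0 : ℝ) < k + k₀ := by positivity
  have hratio (k : ℕ) :
      γ k / (2 * α k) = cγ / (2 * cα) * ((k : ℝ) + (k₀ : ℝ)) ^ (a - c) := by
    have h1 := Real.rpow_pos_of_pos (hpos k) a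
    have h2 := Real.rpow_pos_of_pos (hpos k) c
    rw [hα, hγ, Real.rpow_sub (hpos k)]
    field_simp
  have hstep (k : ℕ) (hk : lam k = γ k / (2 * α k)) :
      δ k = γ (k + 1) / (2 * α (k + 1)) - lam k := by
    rw [hδ]
    apply min_eq_right
    rw [hk, hratio, hratio, hα]
    have hinc := schedule_increment_le hc hca ha hk₀_pos
      (le_add_of_nonneg_left (Nat.cast_nonneg k : (0 : ℝ) ≤ k))
    have hshift : ((k + 1 : ℕ) : ℝ) + k₀ = (k + k₀ : ℝ) + 1 := by
      push_cast
      ring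
    rw [hshift]
    set x : ℝ := k + k₀
    have hxa : 0 < x ^ a := Real.rpow_pos_of_pos (hpos k) a
    have hyc : 0 < (k₀ : ℝ) ^ (1 - c) := Real.rpow_pos_of_pos hk₀_pos _
    have hT' : (1 : ℝ) ≤ T / 32 := by
      rw [le_div_iff₀ (by norm_num)]
      exact_mod_cast hT
    have hcγ_pos : 0 < cγ := by rw [hcγ]; positivity
    have hquad : (T : ℝ) * μg / 16 * (cα / x ^ a) * (cγ / (2 * cα) * x ^ (a - c)) ^ 2 =
        cγ / (2 * cα) * (T / 32 * ((x ^ (a - c)) ^ 2 / ((k₀ : ℝ) ^ (1 - c) * x ^ a))) := by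
      rw [hcγ]
      field_simp
      ring
    rw [hquad, ← mul_sub]
    gcongr
    exact hinc.trans (le_mul_of_one_le_left (by positivity) hT')
  have hlam (k : ℕ) : lam k = γ k / (2 * α k) := by
    induction k with
    | zero => exact hlam0
    | succ k ih => rw [hrec, hstep k ih, add_sub_cancel]
  exact fun k => ⟨hlam k, (hlam k).trans (hratio k), hstep k (hlam k)⟩
end
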